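/- Let e ≥ 2, let r ≥ 1, let B be a base tuple and let M ∈ M̌(r,e). Then the multipartition Pt(B,M) is Kleshchev with respect to its multicharge if and only if Pt(0,M) is Kleshchev with respect to its multicharge, where 0 denotes the zero base tuple (0,…,0). -/

import Mathlib

open scoped Classical

namespace AK
noncomputable section



/-! ### Matrices, order from base tuple, abacus β-sets -/

/-- The order ≺ on columns determined by a base tuple `B`. -/
def prec {e : ℕ} (B : Fin e → ℕ) (i j : Fin e) : Prop :=
  B i < B j ∨ (B i = B j ∧ i < j)

/-- `rank B i = π(B)⁻¹(i)`, the number of columns ≺-smaller than `i`. -/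
def rank {e : ℕ} (B : Fin e → ℕ) (i : Fin e) : Fin e :=
  ⟨(Finset.univ.filter (fun j => prec B j i)).card, by
    have h1 : (Finset.univ.filter (fun j => prec B j i)) ⊆ Finset.univ.erase i := by
      intro j hj
      rw [Finset.mem_filter] at hj
      refine Finset.mem_erase.mpr ⟨?_, Finset.mem_univ j⟩
      rintro rfl
      rcases hj.2 with h | ⟨-, h⟩ <;> exact lt_irrefl _ h
    have h2 := Finset.card_le_card h1
    have h3 : (Finset.univ.erase i).card < Finset.univ.card :=
      Finset.card_erase_lt_of_mem (Finset.mem_univ i)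
    simpa using lt_of_le_of_lt h2 h3⟩

/-- The number of beads on runner `i` of the abacus of component `s` of `Pt(B,M)`. -/
def beads {e r : ℕ} (B : Fin e → ℕ) (M : Fin r → Fin e → Bool) (s : Fin r) (i : Fin e) : ℕ :=
  B i + (if M s (rank B i) then 1 else 0)

/-- The canonical β-set of component `s` of `Pt(B,M)`. -/
def Tset {e r : ℕ} (B : Fin e → ℕ) (M : Fin r → Fin e → Bool) (s : Fin r) : Set ℤ :=
  {z | z < 0 ∨ (0 ≤ z ∧ ∃ h : z.toNat % e < e, z.toNat / e < beads B M s ⟨z.toNat % e, h⟩)}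

/-- `n_s`, the total number of beads of component `s`. -/
def nsum {e r : ℕ} (B : Fin e → ℕ) (M : Fin r → Fin e → Bool) (s : Fin r) : ℕ :=
  ∑ i : Fin e, beads B M s i

/-- Decreasing enumeration of a set of integers: `tEnum T x` is `t_{x+1}`. -/
noncomputable def tEnum (T : Set ℤ) : ℕ → ℤ
  | 0 => sSup T
  | (x + 1) => sSup (T ∩ Set.Iio (tEnum T x))

/-- The multipartition `Pt(B,M)`: component `s`, part `p+1` (0-indexed parts). -/
noncomputable def PtPart {e r : ℕ} (B : Fin e → ℕ) (M : Fin r → Fin e → Bool)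
    (s : Fin r) (p : ℕ) : ℕ :=
  (tEnum (Tset B M s) p + (p + 1) - (nsum B M s : ℤ)).toNat

/-- The multicharge of `Pt(B,M)`. -/
noncomputable def PtCharge {e r : ℕ} (B : Fin e → ℕ) (M : Fin r → Fin e → Bool)
    (s : Fin r) : ZMod e :=
  (nsum B M s : ZMod e)

/-! ### Nodes, good nodes and Kleshchev multipartitions -/

/-- A node `(s, x, y)` (all 0-indexed). -/
abbrev Node (r : ℕ) := Fin r × ℕ × ℕ

/-- `A` is above `B`. -/
def NodeAbove {r : ℕ} (A B : Node r) : Prop :=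
  A.1 < B.1 ∨ (A.1 = B.1 ∧ A.2.1 < B.2.1)

/-- The residue of a node. -/
def res {e r : ℕ} (a : Fin r → ZMod e) (A : Node r) : ZMod e :=
  a A.1 - (A.2.1 : ZMod e) + (A.2.2 : ZMod e)

/-- `A` is a removable node of `lam`. -/
def Removable {r : ℕ} (lam : Fin r → ℕ → ℕ) (A : Node r) : Prop :=
  A.2.2 + 1 = lam A.1 A.2.1 ∧ lam A.1 (A.2.1 + 1) < lam A.1 A.2.1

/-- `A` is an addable node of `lam`. -/
def Addable {r : ℕ} (lam : Fin r → ℕ → ℕ) (A : Node r) : Prop :=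
  A.2.2 = lam A.1 A.2.1 ∧ (A.2.1 = 0 ∨ lam A.1 A.2.1 < lam A.1 (A.2.1 - 1))

/-- `A` is a normal node of `lam`. -/
def Normal {e r : ℕ} (a : Fin r → ZMod e) (lam : Fin r → ℕ → ℕ) (A : Node r) : Prop :=
  Removable lam A ∧
    ∀ B : Node r, Addable lam B → res a B = res a A → NodeAbove A B →
      Set.ncard {C : Node r | Addable lam C ∧ res a C = res a A ∧ NodeAbove A C ∧ NodeAbove C B}
        < Set.ncard {C : Node r | Removable lam C ∧ res a C = res a A ∧ NodeAbove A C ∧ NodeAbove C B}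

/-- `A` is a good node of `lam`: normal, and highest among normal nodes of its residue. -/
def Good {e r : ℕ} (a : Fin r → ZMod e) (lam : Fin r → ℕ → ℕ) (A : Node r) : Prop :=
  Normal a lam A ∧ ∀ B : Node r, Normal a lam B → res a B = res a A → B ≠ A → NodeAbove A B

/-- Remove the node `A` from `lam`. -/
def removeNode {r : ℕ} (lam : Fin r → ℕ → ℕ) (A : Node r) : Fin r → ℕ → ℕ :=
  fun s x => if s = A.1 ∧ x = A.2.1 then lam s x - 1 else lam s x

/-- Kleshchev multipartitions (for the multicharge `a`). -/
inductive IsKleshchev {e r : ℕ} (a : Fin r → ZMod e) : (Fin r → ℕ → ℕ) → Prop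
  | empty : IsKleshchev a (fun _ _ => 0)
  | step (lam : Fin r → ℕ → ℕ) (A : Node r) (hA : Good a lam A)
      (h : IsKleshchev a (removeNode lam A)) : IsKleshchev a lam

/-! ### Weights and bead swaps -/

/-- `δ₊^M(t,s)`. -/
def deltaP {e r : ℕ} (M : Fin r → Fin e → Bool) (t s : Fin r) : ℕ :=
  (Finset.univ.filter (fun i => M t i = true ∧ M s i = false)).card

/-- `wt^M(t,s)`. -/
def wtPair {e r : ℕ} (M : Fin r → Fin e → Bool) (t s : Fin r) : ℕ :=
  min (deltaP M t s) (deltaP M s t)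

/-- `wt(M)`. -/
def wtM {e r : ℕ} (M : Fin r → Fin e → Bool) : ℕ :=
  ∑ t : Fin r, ∑ s ∈ Finset.univ.filter (· < t), wtPair M t s

/-- `M'` is obtained from `M` by a bead swap. -/
def BeadSwap {e r : ℕ} (M M' : Fin r → Fin e → Bool) : Prop :=
  ∃ i j : Fin e, i ≠ j ∧ ∃ s t : Fin r, s ≠ t ∧
    M s i = true ∧ M t j = true ∧ M s j = false ∧ M t i = false ∧
    M' s i = false ∧ M' t j = false ∧ M' s j = true ∧ M' t i = true ∧
    (∀ s' i', (s' ≠ s ∧ s' ≠ t) ∨ (i' ≠ i ∧ i' ≠ j) → M' s' i' = M s' i')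


/-! ### Words and their crystal operators -/

/-- Signature of the letter at position `k` for the colour `c`. -/
def sg (n : ℕ) (R A : ℕ → Prop) (c : ℤ) (w : ℕ → ℤ) (k : ℕ) : ℤ :=
  (if R k ∧ (n : ℤ) ∣ w k - c then 1 else 0) - (if A k ∧ (n : ℤ) ∣ w k + 1 - c then 1 else 0)

/-- Height function. -/
def ht (n : ℕ) (R A : ℕ → Prop) (c : ℤ) (w : ℕ → ℤ) (k : ℕ) : ℤ :=
  ∑ m ∈ Finset.range k, sg n R A c w m

/-- The letter at `k` is the good one: `k` is the last minimum of the height function. -/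
def Gd (n : ℕ) (R A : ℕ → Prop) (c : ℤ) (w : ℕ → ℤ) (k : ℕ) : Prop :=
  (∀ m ≤ k, ht n R A c w k ≤ ht n R A c w m) ∧ ∀ m, k < m → ht n R A c w k < ht n R A c w m

/-- Cartan integers. -/
def car (n : ℕ) (c d : ℤ) : ℤ :=
  2 * (if (n : ℤ) ∣ c - d then 1 else 0) - (if (n : ℤ) ∣ c - d - 1 then 1 else 0)
    - (if (n : ℤ) ∣ c - d + 1 then 1 else 0)

/-- Decrease the letter at position `k`. -/
def dec (w : ℕ → ℤ) (k : ℕ) : ℕ → ℤ := w - Pi.single k 1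

lemma dec_apply (w : ℕ → ℤ) (k m : ℕ) : dec w k m = w m - if m = k then 1 else 0 := by
  simp [dec, Pi.single_apply]

lemma ht_succ (n : ℕ) (R A : ℕ → Prop) (c : ℤ) (w : ℕ → ℤ) (k : ℕ) :
    ht n R A c w (k + 1) = ht n R A c w k + sg n R A c w k := by
  simp [ht, Finset.sum_range_succ]

lemma ht_zero (n : ℕ) (R A : ℕ → Prop) (c : ℤ) (w : ℕ → ℤ) : ht n R A c w 0 = 0 := by
  simp [ht]

lemma sg_le (n : ℕ) (R A : ℕ → Prop) (c : ℤ) (w : ℕ → ℤ) (k : ℕ) : sg n R A c w k ≤ 1 := by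
  unfold sg; split_ifs <;> omega

lemma sg_pos {n : ℕ} {R A : ℕ → Prop} {c : ℤ} {w : ℕ → ℤ} {k : ℕ} (h : 0 < sg n R A c w k) :
    R k ∧ (n : ℤ) ∣ w k - c := by
  unfold sg at h
  by_contra h'
  rw [if_neg h'] at h
  split_ifs at h <;> omega

lemma Gd.sg_pos {n : ℕ} {R A : ℕ → Prop} {c : ℤ} {w : ℕ → ℤ} {k : ℕ} (h : Gd n R A c w k) :
    0 < sg n R A c w k := by
  have := h.2 (k + 1) (Nat.lt_succ_self k)
  rw [ht_succ] at this; omega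

lemma Gd.ht_succ {n : ℕ} {R A : ℕ → Prop} {c : ℤ} {w : ℕ → ℤ} {k : ℕ} (h : Gd n R A c w k) :
    ht n R A c w (k + 1) = ht n R A c w k + 1 := by
  have := h.sg_pos
  have := sg_le n R A c w k
  rw [AK.ht_succ]; omega

lemma sg_dec {n : ℕ} {R A : ℕ → Prop} {c : ℤ} {w : ℕ → ℤ} {p : ℕ} (hR : R p) (hA : A p)
    (hc : (n : ℤ) ∣ w p - c) (d : ℤ) (m : ℕ) :
    sg n R A d (dec w p) m = sg n R A d w m - if m = p then car n c d else 0 := by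
  by_cases hm : m = p
  · subst hm
    have e1 : (n : ℤ) ∣ w m - 1 - d ↔ (n : ℤ) ∣ c - d - 1 := by
      rw [show w m - 1 - d = (w m - c) + (c - d - 1) by ring, Int.dvd_add_right hc]
    have e2 : (n : ℤ) ∣ w m - d ↔ (n : ℤ) ∣ c - d := by
      rw [show w m - d = (w m - c) + (c - d) by ring, Int.dvd_add_right hc]
    have e3 : (n : ℤ) ∣ w m + 1 - d ↔ (n : ℤ) ∣ c - d + 1 := by
      rw [show w m + 1 - d = (w m - c) + (c - d + 1) by ring, Int.dvd_add_right hc]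
    have e4 : w m - 1 + 1 - d = w m - d := by ring
    simp only [sg, dec_apply, hR, hA, true_and, if_true, car, e4, e1, e2, e3]
    ring
  · simp [sg, dec_apply, hm]

lemma ht_dec {n : ℕ} {R A : ℕ → Prop} (hRA : ∀ k, R k → A k) {c : ℤ} {w : ℕ → ℤ} {p : ℕ}
    (hg : Gd n R A c w p) (d : ℤ) (m : ℕ) :
    ht n R A d (dec w p) m = ht n R A d w m - if p < m then car n c d else 0 := by
  obtain ⟨hR, hc⟩ := AK.sg_pos hg.sg_pos
  induction m with
  | zero => simp [ht_zero]
  | succ m ih =>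
    rw [ht_succ, ht_succ, ih, sg_dec hR (hRA _ hR) hc]
    by_cases h1 : m = p
    · subst h1; simp; ring
    · by_cases h2 : p < m
      · have : p < m + 1 := by omega
        simp [h1, h2, this]; ring
      · have : ¬ p < m + 1 := by omega
        simp [h1, h2, this]

lemma Gd.unique {n : ℕ} {R A : ℕ → Prop} {c : ℤ} {w : ℕ → ℤ} {p q : ℕ}
    (hp : Gd n R A c w p) (hq : Gd n R A c w q) : p = q := by
  rcases lt_trichotomy p q with h | h | h
  · have := hp.2 q h; have := hq.1 p h.le; omega
  · exact h
  · have := hq.2 p h; have := hp.1 q h.le; omega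

lemma sg_congr {n : ℕ} {R A : ℕ → Prop} {c d : ℤ} (h : (n : ℤ) ∣ c - d) (w : ℕ → ℤ) (k : ℕ) :
    sg n R A c w k = sg n R A d w k := by
  have e1 : (n : ℤ) ∣ w k - c ↔ (n : ℤ) ∣ w k - d := by
    rw [show w k - d = (w k - c) + (c - d) by ring, Int.dvd_add_left h]
  have e2 : (n : ℤ) ∣ w k + 1 - c ↔ (n : ℤ) ∣ w k + 1 - d := by
    rw [show w k + 1 - d = (w k + 1 - c) + (c - d) by ring, Int.dvd_add_left h]
  simp only [sg, e1, e2]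

lemma Gd.congr {n : ℕ} {R A : ℕ → Prop} {c d : ℤ} (h : (n : ℤ) ∣ c - d) {w : ℕ → ℤ} {k : ℕ}
    (hg : Gd n R A c w k) : Gd n R A d w k := by
  have : ∀ m, ht n R A d w m = ht n R A c w m := fun m => by simp [ht, sg_congr h]
  simpa only [Gd, this] using hg

/-- A step of the crystal graph (towards the highest weight). -/
def Stp (n : ℕ) (R A : ℕ → Prop) (w w' : ℕ → ℤ) : Prop :=
  ∃ c k, Gd n R A c w k ∧ w' = dec w k

lemma exists_last (P : ℕ → Prop) (p : ℕ) (h : ∃ m ≤ p, P m) :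
    ∃ u ≤ p, P u ∧ ∀ m ≤ p, u < m → ¬ P m := by
  induction p with
  | zero =>
    obtain ⟨m, hm, hP⟩ := h
    exact ⟨m, hm, hP, fun k hk hk' => by omega⟩
  | succ p ih =>
    by_cases hp : P (p + 1)
    · exact ⟨p + 1, le_rfl, hp, fun k hk hk' => by omega⟩
    · obtain ⟨m, hm, hP⟩ := h
      have hm' : m ≤ p := by
        rcases Nat.lt_or_ge p m with h | h
        · have : m = p + 1 := by omega
          subst this; exact absurd hP hp
        · exact h
      obtain ⟨u, hu, hPu, hl⟩ := ih ⟨m, hm', hP⟩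
      refine ⟨u, by omega, hPu, fun k hk hk' => ?_⟩
      rcases Nat.lt_or_ge p k with h | h
      · have : k = p + 1 := by omega
        subst this; exact hp
      · exact hl k h hk'

lemma dec_comm (w : ℕ → ℤ) (p q : ℕ) : dec (dec w p) q = dec (dec w q) p := by
  unfold dec; abel

/-- Joinability conclusion. -/
def Joins (n : ℕ) (R A : ℕ → Prop) (x y : ℕ → ℤ) : Prop :=
  x = y ∨ (∃ v, Stp n R A x v ∧ Stp n R A y v) ∨
    ∃ x1 x2 y1 y2 v, Stp n R A x x1 ∧ Stp n R A x1 x2 ∧ Stp n R A x2 v ∧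
      Stp n R A y y1 ∧ Stp n R A y1 y2 ∧ Stp n R A y2 v

lemma Joins.symm {n : ℕ} {R A : ℕ → Prop} {x y : ℕ → ℤ} (h : Joins n R A x y) :
    Joins n R A y x := by
  rcases h with h | ⟨v, h1, h2⟩ | ⟨x1, x2, y1, y2, v, h1, h2, h3, h4, h5, h6⟩
  · exact Or.inl h.symm
  · exact Or.inr (Or.inl ⟨v, h2, h1⟩)
  · exact Or.inr (Or.inr ⟨y1, y2, x1, x2, v, h4, h5, h6, h1, h2, h3⟩)

lemma joins_adj {n : ℕ} {R A : ℕ → Prop} (hRA : ∀ k, R k → A k) {c d : ℤ} {w : ℕ → ℤ} {p q : ℕ}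
    (hcc : car n c c = 2) (hdd : car n d d = 2) (hcd : car n c d = -1) (hdc : car n d c = -1)
    (hp : Gd n R A c w p) (hq : Gd n R A d w q) (hpq : p < q) :
    Joins n R A (dec w p) (dec w q) := by
  have Hp := ht_dec hRA hp
  have Hq := ht_dec hRA hq
  -- e_c after e_d always acts at p
  have hqp : Gd n R A c (dec w q) p := by
    refine ⟨fun m hm => ?_, fun m hm => ?_⟩
    · have := hp.1 m hm
      rw [Hq, Hq, hdc, if_neg (by omega), if_neg (by omega)]; omega
    · have := hp.2 m hm
      rw [Hq, Hq, hdc]; split_ifs <;> omega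
  by_cases hex : ∃ m ≤ p, ht n R A d w m = ht n R A d w q
  · obtain ⟨p', hp'p, hp'e, hlast⟩ := exists_last _ p hex
    have hpp : ht n R A c w (p + 1) = ht n R A c w p + 1 := hp.ht_succ
    obtain ⟨u, huq, ⟨hpu, hue⟩, hul⟩ := exists_last
      (fun m => p < m ∧ ht n R A c w m = ht n R A c w p + 1) q ⟨p + 1, hpq, by omega, hpp⟩
    have hqd : ∀ m, ht n R A d w q ≤ ht n R A d w m := fun m => by
      rcases Nat.lt_or_ge q m with h | h
      · exact (hq.2 m h).le
      · exact hq.1 m h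
    have hpc : ∀ m, ht n R A c w p ≤ ht n R A c w m := fun m => by
      rcases Nat.lt_or_ge p m with h | h
      · exact (hp.2 m h).le
      · exact hp.1 m h
    -- path 1
    have g1 : Gd n R A d (dec w p) p' := by
      refine ⟨fun m hm => ?_, fun m hm => ?_⟩
      · have := hqd m
        rw [Hp, Hp, hcd, if_neg (by omega), if_neg (by omega)]; omega
      · have h1 := hqd m
        have h2 := hlast m
        rw [Hp, Hp, hcd, if_neg (by omega)]; split_ifs
        · omega
        · have := h2 (by omega) hm; omega
    have H1 := ht_dec hRA g1
    have g2 : Gd n R A d (dec (dec w p) p') q := by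
      refine ⟨fun m hm => ?_, fun m hm => ?_⟩
      · have h1 := hqd m
        have h2 := hlast m
        rw [H1, H1, Hp, Hp, hcd, hdd, if_pos (by omega), if_pos (by omega)]
        by_cases h3 : m ≤ p
        · by_cases h4 : p' < m
          · have := h2 h3 h4
            rw [if_neg (by omega), if_pos h4]; omega
          · rw [if_neg (by omega), if_neg h4]; omega
        · rw [if_pos (by omega), if_pos (by omega)]; omega
      · have h1 := hq.2 m hm
        rw [H1, H1, Hp, Hp, hcd, hdd, if_pos (by omega), if_pos (by omega), if_pos (by omega),
          if_pos (by omega)]; omega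
    have H2 := ht_dec hRA g2
    have g3 : Gd n R A c (dec (dec (dec w p) p') q) u := by
      have hu : ht n R A c (dec (dec (dec w p) p') q) u = ht n R A c w p := by
        rw [H2, H1, Hp, hcc, hdc, if_neg (show ¬ q < u by omega), if_pos (show p < u by omega),
          if_pos (show p' < u by omega)]; omega
      refine ⟨fun m hm => ?_, fun m hm => ?_⟩
      · have h1 := hpc m
        have h2 := hp.2 m
        rw [hu, H2, H1, Hp, hcc, hdc, if_neg (show ¬ q < m by omega)]
        by_cases h3 : p < m
        · have := h2 h3
          rw [if_pos h3, if_pos (by omega)]; omega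
        · rw [if_neg h3]; split_ifs <;> omega
      · have h1 := hp.2 m (by omega)
        have h2 := hul m
        rw [hu, H2, H1, Hp, hcc, hdc, if_pos (show p < m by omega), if_pos (show p' < m by omega)]
        by_cases h3 : q < m
        · rw [if_pos h3]; omega
        · have := h2 (by omega) hm
          rw [if_neg h3]
          have h4 : ht n R A c w m ≠ ht n R A c w p + 1 := fun h => this ⟨by omega, h⟩
          omega
    -- path 2
    have K1 := ht_dec hRA hqp
    have k2 : Gd n R A c (dec (dec w q) p) u := by
      have hu : ht n R A c (dec (dec w q) p) u = ht n R A c w p - 1 := by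
        rw [K1, Hq, hcc, hdc, if_neg (show ¬ q < u by omega), if_pos (show p < u by omega)]; omega
      refine ⟨fun m hm => ?_, fun m hm => ?_⟩
      · have h1 := hpc m
        have h2 := hp.2 m
        rw [hu, K1, Hq, hcc, hdc, if_neg (show ¬ q < m by omega)]
        by_cases h3 : p < m
        · have := h2 h3
          rw [if_pos h3]; omega
        · rw [if_neg h3]; omega
      · have h1 := hp.2 m (by omega)
        have h2 := hul m
        rw [hu, K1, Hq, hcc, hdc, if_pos (show p < m by omega)]
        by_cases h3 : q < m
        · rw [if_pos h3]; omega
        · have := h2 (by omega) hm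
          rw [if_neg h3]
          have h4 : ht n R A c w m ≠ ht n R A c w p + 1 := fun h => this ⟨by omega, h⟩
          omega
    have K2 := ht_dec hRA k2
    have k3 : Gd n R A d (dec (dec (dec w q) p) u) p' := by
      have hu : ht n R A d (dec (dec (dec w q) p) u) p' = ht n R A d w q := by
        rw [K2, K1, Hq, hcd, hdd, if_neg (by omega), if_neg (by omega), if_neg (by omega)]; omega
      refine ⟨fun m hm => ?_, fun m hm => ?_⟩
      · have h1 := hqd m
        rw [hu, K2, K1, Hq, hcd, hdd, if_neg (by omega), if_neg (by omega), if_neg (by omega)]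
        omega
      · have h1 := hqd m
        have h2 := hlast m
        have h5 := hq.2 m
        rw [hu, K2, K1, Hq, hcd, hdd]
        by_cases h3 : q < m
        · have := h5 h3
          rw [if_pos h3, if_pos (by omega), if_pos (by omega)]; omega
        · rw [if_neg h3]
          by_cases h4 : p < m
          · rw [if_pos h4]; split_ifs <;> omega
          · have := h2 (by omega) hm
            rw [if_neg h4, if_neg (by omega)]; omega
    refine Or.inr (Or.inr ⟨_, _, _, _, _, ⟨d, _, g1, rfl⟩, ⟨d, _, g2, rfl⟩, ⟨c, _, g3, rfl⟩,
      ⟨c, _, hqp, rfl⟩, ⟨c, _, k2, rfl⟩, ⟨d, _, k3, ?_⟩⟩)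
    unfold dec; abel
  · have hpq' : Gd n R A d (dec w p) q := by
      refine ⟨fun m hm => ?_, fun m hm => ?_⟩
      · have h1 := hq.1 m hm
        have h2 : m ≤ p → ht n R A d w m ≠ ht n R A d w q := fun h h' => hex ⟨m, h, h'⟩
        rw [Hp, Hp, hcd, if_pos hpq]
        split_ifs
        · omega
        · have := h2 (by omega); omega
      · have := hq.2 m hm
        rw [Hp, Hp, hcd, if_pos hpq, if_pos (by omega)]; omega
    exact Or.inr (Or.inl ⟨_, ⟨d, q, hpq', rfl⟩, ⟨c, p, hqp, dec_comm _ _ _⟩⟩)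

lemma joins {n : ℕ} (hn : 3 ≤ n) {R A : ℕ → Prop} (hRA : ∀ k, R k → A k) {w x y : ℕ → ℤ}
    (hx : Stp n R A w x) (hy : Stp n R A w y) : Joins n R A x y := by
  obtain ⟨c, p, hp, rfl⟩ := hx
  obtain ⟨d, q, hq, rfl⟩ := hy
  have hself : ∀ c : ℤ, car n c c = 2 := by
    intro c
    have h1 : ¬ (n : ℤ) ∣ c - c - 1 := fun h => by
      have := Int.le_of_dvd (by norm_num) ((Int.dvd_neg).mpr h); omega
    have h2 : ¬ (n : ℤ) ∣ c - c + 1 := fun h => by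
      have := Int.le_of_dvd (by norm_num) h; omega
    rw [car, if_neg h1, if_neg h2, if_pos (by simp)]; rfl
  have hsymm : car n c d = car n d c := by
    have e1 : (n : ℤ) ∣ c - d ↔ (n : ℤ) ∣ d - c := by
      rw [← Int.dvd_neg, show -(c - d) = d - c by ring]
    have e2 : (n : ℤ) ∣ c - d - 1 ↔ (n : ℤ) ∣ d - c + 1 := by
      rw [← Int.dvd_neg, show -(c - d - 1) = d - c + 1 by ring]
    have e3 : (n : ℤ) ∣ c - d + 1 ↔ (n : ℤ) ∣ d - c - 1 := by
      rw [← Int.dvd_neg, show -(c - d + 1) = d - c - 1 by ring]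
    simp only [car, e1, e2, e3]; ring
  by_cases h0 : (n : ℤ) ∣ c - d
  · have := (hp.congr h0).unique hq
    subst this; exact Or.inl rfl
  · have hpq : p ≠ q := by
      rintro rfl
      have h1 := (AK.sg_pos hp.sg_pos).2
      have h2 := (AK.sg_pos hq.sg_pos).2
      apply h0
      have := dvd_sub h2 h1
      rwa [show w p - d - (w p - c) = c - d by ring] at this
    have hcar : car n c d = 0 ∨ car n c d = -1 := by
      have : ¬ ((n : ℤ) ∣ c - d - 1 ∧ (n : ℤ) ∣ c - d + 1) := by
        rintro ⟨h1, h2⟩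
        have := dvd_sub h2 h1
        rw [show c - d + 1 - (c - d - 1) = 2 by ring] at this
        have := Int.le_of_dvd (by norm_num) this
        omega
      unfold car
      rw [if_neg h0]
      split_ifs <;> simp_all
    rcases hcar with hcar | hcar
    · have H1 := ht_dec hRA hp d
      have H2 := ht_dec hRA hq c
      rw [hcar] at H1
      rw [← hsymm, hcar] at H2
      simp only [ite_self, sub_zero] at H1 H2
      refine Or.inr (Or.inl ⟨_, ⟨d, q, ?_, rfl⟩, ⟨c, p, ?_, dec_comm _ _ _⟩⟩)
      · simpa only [Gd, H1] using hq
      · simpa only [Gd, H2] using hp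
    · rcases Nat.lt_or_ge p q with h | h
      · exact joins_adj hRA (hself c) (hself d) hcar (hsymm ▸ hcar) hp hq h
      · exact (joins_adj hRA (hself d) (hself c) (hsymm ▸ hcar) hcar hq hp (by omega)).symm

/-- `m`-step reachability. -/
def Rch (n : ℕ) (R A : ℕ → Prop) : ℕ → (ℕ → ℤ) → (ℕ → ℤ) → Prop
  | 0, w, v => w = v
  | m + 1, w, v => ∃ u, Stp n R A w u ∧ Rch n R A m u v

lemma rch_closed {n : ℕ} (hn : 3 ≤ n) {R A : ℕ → Prop} (hRA : ∀ k, R k → A k) {v : ℕ → ℤ}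
    (hv : ∀ u, ¬ Stp n R A v u) (m : ℕ) : ∀ w, Rch n R A m w v → ∀ w', Stp n R A w w' →
      ∃ m', m = m' + 1 ∧ Rch n R A m' w' v := by
  induction m using Nat.strong_induction_on with
  | _ m ih =>
    intro w hw w' hw'
    cases m with
    | zero => exact absurd (hw ▸ hw') (hv w')
    | succ m =>
      refine ⟨m, rfl, ?_⟩
      obtain ⟨u, hwu, hu⟩ := hw
      rcases joins hn hRA hwu hw' with h | ⟨x, h1, h2⟩ | ⟨x1, x2, y1, y2, x, h1, h2, h3, h4, h5, h6⟩
      · exact h ▸ hu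
      · obtain ⟨m', rfl, h'⟩ := ih m (by omega) u hu x h1
        exact ⟨x, h2, h'⟩
      · obtain ⟨m1, rfl, k1⟩ := ih m (by omega) u hu x1 h1
        obtain ⟨m2, rfl, k2⟩ := ih m1 (by omega) _ k1 x2 h2
        obtain ⟨m3, rfl, k3⟩ := ih m2 (by omega) _ k2 x h3
        exact ⟨y1, h4, y2, h5, x, h6, k3⟩

/-! ### Doubling -/

/-- Doubled mask. -/
def dm (R : ℕ → Prop) : ℕ → Prop := fun k => R (k / 2)

/-- Doubled word. -/
def dbl (e : ℕ) (w : ℕ → ℤ) : ℕ → ℤ := fun k => w (k / 2) + if k % 2 = 1 then (e : ℤ) else 0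

lemma dbl_even (e : ℕ) (w : ℕ → ℤ) (k : ℕ) : dbl e w (2 * k) = w k := by
  simp [dbl]

lemma dbl_odd (e : ℕ) (w : ℕ → ℤ) (k : ℕ) : dbl e w (2 * k + 1) = w k + e := by
  have h1 : (2 * k + 1) / 2 = k := by omega
  have h2 : (2 * k + 1) % 2 = 1 := by omega
  simp [dbl, h1, h2]

lemma dvd_double (e : ℕ) (x : ℤ) :
    (e : ℤ) ∣ x ↔ ((2 * e : ℕ) : ℤ) ∣ x ∨ ((2 * e : ℕ) : ℤ) ∣ x + e := by
  push_cast
  constructor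
  · rintro ⟨t, rfl⟩
    rcases Int.even_or_odd' t with ⟨u, rfl | rfl⟩
    · exact Or.inl ⟨u, by ring⟩
    · exact Or.inr ⟨u + 1, by ring⟩
  · rintro (⟨t, ht⟩ | ⟨t, ht⟩)
    · exact ⟨2 * t, by rw [ht]; ring⟩
    · exact ⟨2 * t - 1, by linarith [ht]⟩

lemma not_dvd_small {n : ℕ} {x y : ℤ} (h0 : 0 < y - x) (h1 : y - x < n) (hx : (n : ℤ) ∣ x) :
    ¬ (n : ℤ) ∣ y := fun hy => by
  have := Int.le_of_dvd h0 (dvd_sub hy hx)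
  omega

lemma sg_dbl {e : ℕ} (he : 2 ≤ e) (R A : ℕ → Prop) (c : ℤ) (w : ℕ → ℤ) (k : ℕ) :
    sg (2 * e) (dm R) (dm A) c (dbl e w) (2 * k) + sg (2 * e) (dm R) (dm A) c (dbl e w) (2 * k + 1)
      = sg e R A c w k ∧
    (sg (2 * e) (dm R) (dm A) c (dbl e w) (2 * k) = 0 ∨
      sg (2 * e) (dm R) (dm A) c (dbl e w) (2 * k + 1) = 0) := by
  have h1 : (2 * k + 1) / 2 = k := by omega
  have h2 : (2 * k) / 2 = k := by omega
  have d1 := dvd_double e (w k - c)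
  have d2 := dvd_double e (w k + 1 - c)
  rw [show w k - c + e = w k + e - c by ring] at d1
  rw [show w k + 1 - c + e = w k + e + 1 - c by ring] at d2
  have n1 : ((2 * e : ℕ) : ℤ) ∣ w k - c → ¬ ((2 * e : ℕ) : ℤ) ∣ w k + e - c :=
    not_dvd_small (by omega) (by omega)
  have n2 : ((2 * e : ℕ) : ℤ) ∣ w k - c → ¬ ((2 * e : ℕ) : ℤ) ∣ w k + e + 1 - c :=
    not_dvd_small (by omega) (by omega)
  have n3 : ((2 * e : ℕ) : ℤ) ∣ w k + 1 - c → ¬ ((2 * e : ℕ) : ℤ) ∣ w k + e - c :=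
    not_dvd_small (by omega) (by omega)
  have n4 : ((2 * e : ℕ) : ℤ) ∣ w k + 1 - c → ¬ ((2 * e : ℕ) : ℤ) ∣ w k + e + 1 - c :=
    not_dvd_small (by omega) (by omega)
  simp only [sg, dm, dbl_even, dbl_odd, h1, h2, d1, d2]
  by_cases q1 : ((2 * e : ℕ) : ℤ) ∣ w k - c <;> by_cases q2 : ((2 * e : ℕ) : ℤ) ∣ w k + e - c <;>
    by_cases q3 : ((2 * e : ℕ) : ℤ) ∣ w k + 1 - c <;>
    by_cases q4 : ((2 * e : ℕ) : ℤ) ∣ w k + e + 1 - c <;>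
    first
    | exact absurd q2 (n1 q1)
    | exact absurd q4 (n2 q1)
    | exact absurd q2 (n3 q3)
    | exact absurd q4 (n4 q3)
    | (by_cases q5 : R k <;> by_cases q6 : A k <;>
        simp only [q1, q2, q3, q4, q5, q6, and_true, and_false, or_true, or_false,
          or_self, if_true, if_false] <;> norm_num)

lemma ht_dbl_even {e : ℕ} (he : 2 ≤ e) (R A : ℕ → Prop) (c : ℤ) (w : ℕ → ℤ) (k : ℕ) :
    ht (2 * e) (dm R) (dm A) c (dbl e w) (2 * k) = ht e R A c w k := by
  induction k with
  | zero => simp [ht_zero]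
  | succ k ih =>
    rw [show 2 * (k + 1) = 2 * k + 1 + 1 by ring, ht_succ, ht_succ, ht_succ, ih,
      ← (sg_dbl he R A c w k).1]
    ring

lemma ht_dbl_odd {e : ℕ} (he : 2 ≤ e) (R A : ℕ → Prop) (c : ℤ) (w : ℕ → ℤ) (k : ℕ) :
    ht (2 * e) (dm R) (dm A) c (dbl e w) (2 * k + 1) = ht e R A c w k ∨
      ht (2 * e) (dm R) (dm A) c (dbl e w) (2 * k + 1) = ht e R A c w (k + 1) := by
  have h := sg_dbl he R A c w k
  rw [ht_succ, ht_succ, ht_dbl_even he]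
  rcases h with ⟨h1, h2 | h2⟩
  · left; omega
  · right; omega

lemma gd_dbl {e : ℕ} (he : 2 ≤ e) {R A : ℕ → Prop} {c : ℤ} {w : ℕ → ℤ} {k : ℕ}
    (h : Gd (2 * e) (dm R) (dm A) c (dbl e w) k) : Gd e R A c w (k / 2) := by
  have hE := ht_dbl_even he R A c w
  rcases Nat.even_or_odd' k with ⟨l, rfl | rfl⟩
  · rw [show 2 * l / 2 = l by omega]
    refine ⟨fun m hm => ?_, fun m hm => ?_⟩
    · rw [← hE, ← hE]; exact h.1 _ (by omega)
    · rw [← hE, ← hE]; exact h.2 _ (by omega)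
  · rw [show (2 * l + 1) / 2 = l by omega]
    have h1 : ht (2 * e) (dm R) (dm A) c (dbl e w) (2 * l + 1) = ht e R A c w l := by
      rcases ht_dbl_odd he R A c w l with h' | h'
      · exact h'
      · have := h.2 (2 * (l + 1)) (by omega)
        rw [hE] at this; omega
    refine ⟨fun m hm => ?_, fun m hm => ?_⟩
    · rw [← h1, ← hE]; exact h.1 _ (by omega)
    · rw [← h1, ← hE]; exact h.2 _ (by omega)

lemma dbl_dec (e : ℕ) (w : ℕ → ℤ) (k : ℕ) :
    dbl e (dec w k) = dec (dec (dbl e w) (2 * k)) (2 * k + 1) := by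
  funext m
  rcases Nat.even_or_odd' m with ⟨l, rfl | rfl⟩
  · rw [dbl_even]
    simp only [dec_apply, dbl_even]
    by_cases h : l = k
    · subst h; simp
    · rw [if_neg h, if_neg (by omega), if_neg (by omega)]; ring
  · rw [dbl_odd]
    simp only [dec_apply, dbl_odd]
    by_cases h : l = k
    · subst h; simp; ring
    · rw [if_neg h, if_neg (by omega), if_neg (by omega)]; ring

lemma stp_dbl {e : ℕ} (he : 2 ≤ e) {R A : ℕ → Prop} (hRA : ∀ k, R k → A k) {c : ℤ} {w : ℕ → ℤ}
    {k : ℕ} (h : Gd e R A c w k) :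
    ∃ u, Stp (2 * e) (dm R) (dm A) (dbl e w) u ∧
      Stp (2 * e) (dm R) (dm A) u (dbl e (dec w k)) := by
  have hR := (AK.sg_pos h.sg_pos).1
  have hA := hRA k hR
  have hc := (AK.sg_pos h.sg_pos).2
  have hw : Gd e R A (w k) w k := h.congr (by rw [← Int.dvd_neg]; simpa using hc)
  have hwe : Gd e R A (w k + e) w k := hw.congr (by rw [← Int.dvd_neg]; simp)
  have hall : ∀ {c : ℤ}, Gd e R A c w k → ∀ m, ht e R A c w k ≤ ht e R A c w m := by
    intro c hg m
    rcases Nat.lt_or_ge k m with h' | h'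
    · exact (hg.2 m h').le
    · exact hg.1 m h'
  have k1 : (2 * k + 1) / 2 = k := by omega
  have k2 : (2 * k) / 2 = k := by omega
  -- sign of the even letter for the two colours
  have s1 : sg (2 * e) (dm R) (dm A) (w k) (dbl e w) (2 * k) = 1 := by
    have : ¬ ((2 * e : ℕ) : ℤ) ∣ 1 :=
      not_dvd_small (x := 0) (by omega) (by omega) (dvd_zero _)
    have e1 : w k + 1 - w k = 1 := by ring
    simp only [sg, dm, dbl_even, k2, hR, hA, true_and, sub_self, dvd_zero, if_true, e1]
    rw [if_neg this]; rfl
  have s2 : sg (2 * e) (dm R) (dm A) (w k + e) (dbl e w) (2 * k) = 0 := by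
    have h1 : ¬ ((2 * e : ℕ) : ℤ) ∣ w k - (w k + e) := by
      rw [← Int.dvd_neg]
      exact not_dvd_small (x := 0) (by omega) (by omega) (dvd_zero _)
    have h2 : ¬ ((2 * e : ℕ) : ℤ) ∣ w k + 1 - (w k + e) := by
      rw [← Int.dvd_neg]
      exact not_dvd_small (x := 0) (by omega) (by omega) (dvd_zero _)
    simp only [sg, dm, dbl_even, k2, hR, hA, true_and]
    rw [if_neg h1, if_neg h2]; rfl
  have g1 : Gd (2 * e) (dm R) (dm A) (w k) (dbl e w) (2 * k) := by
    have hE := ht_dbl_even he R A (w k) w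
    have hO := ht_dbl_odd he R A (w k) w
    refine ⟨fun m hm => ?_, fun m hm => ?_⟩
    · rcases Nat.even_or_odd' m with ⟨l, rfl | rfl⟩
      · rw [hE, hE]; exact hall hw l
      · rw [hE]
        have a1 := hall hw l
        have a2 := hall hw (l + 1)
        rcases hO l with h' | h' <;> rw [h'] <;> assumption
    · rcases Nat.even_or_odd' m with ⟨l, rfl | rfl⟩
      · rw [hE, hE]; exact hw.2 l (by omega)
      · by_cases hl : l = k
        · subst hl
          rw [ht_succ, s1]; omega
        · rw [hE]
          have a1 := hw.2 l (by omega)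
          have a2 := hw.2 (l + 1) (by omega)
          rcases hO l with h' | h' <;> rw [h'] <;> assumption
  have hcar : car (2 * e) (w k) (w k + e) = 0 := by
    have h1 : ¬ ((2 * e : ℕ) : ℤ) ∣ w k - (w k + e) := by
      rw [← Int.dvd_neg]
      exact not_dvd_small (x := 0) (by omega) (by omega) (dvd_zero _)
    have h2 : ¬ ((2 * e : ℕ) : ℤ) ∣ w k - (w k + e) + 1 := by
      rw [← Int.dvd_neg]
      exact not_dvd_small (x := 0) (by omega) (by omega) (dvd_zero _)
    have h3 : ¬ ((2 * e : ℕ) : ℤ) ∣ w k - (w k + e) - 1 := by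
      rw [← Int.dvd_neg]
      exact not_dvd_small (x := 0) (by omega) (by omega) (dvd_zero _)
    rw [car, if_neg h1, if_neg h2, if_neg h3]; rfl
  have hD := ht_dec (R := dm R) (A := dm A) (fun k => hRA (k / 2)) g1 (w k + e)
  rw [hcar] at hD
  simp only [ite_self, sub_zero] at hD
  have g2 : Gd (2 * e) (dm R) (dm A) (w k + e) (dec (dbl e w) (2 * k)) (2 * k + 1) := by
    have hE := ht_dbl_even he R A (w k + e) w
    have hO := ht_dbl_odd he R A (w k + e) w
    have h0 : ht (2 * e) (dm R) (dm A) (w k + e) (dbl e w) (2 * k + 1) = ht e R A (w k + e) w k := by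
      rw [ht_succ, s2, hE]; ring
    refine ⟨fun m hm => ?_, fun m hm => ?_⟩
    · rw [hD, hD, h0]
      rcases Nat.even_or_odd' m with ⟨l, rfl | rfl⟩
      · rw [hE]; exact hall hwe l
      · have a1 := hall hwe l
        have a2 := hall hwe (l + 1)
        rcases hO l with h' | h' <;> rw [h'] <;> assumption
    · rw [hD, hD, h0]
      rcases Nat.even_or_odd' m with ⟨l, rfl | rfl⟩
      · rw [hE]; exact hwe.2 l (by omega)
      · have a1 := hwe.2 l (by omega)
        have a2 := hwe.2 (l + 1) (by omega)
        rcases hO l with h' | h' <;> rw [h'] <;> assumption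
  exact ⟨_, ⟨_, _, g1, rfl⟩, ⟨_, _, g2, dbl_dec e w k⟩⟩

/-! ### Multipartitions as words -/

/-- `lam` is a multipartition all of whose components have at most `L` parts. -/
def IsMP {r : ℕ} (L : ℕ) (lam : Fin r → ℕ → ℕ) : Prop :=
  (∀ s x y, x ≤ y → lam s y ≤ lam s x) ∧ ∀ s x, L ≤ x → lam s x = 0

/-- Mask of letters that count as addable. -/
def mA (r L : ℕ) (k : ℕ) : Prop := k / (L + 1) < r

/-- Mask of letters that count as removable. -/
def mR (r L : ℕ) (k : ℕ) : Prop := k / (L + 1) < r ∧ k % (L + 1) < L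

/-- The word of a multipartition. -/
def wd {r : ℕ} (L : ℕ) (c : Fin r → ℤ) (lam : Fin r → ℕ → ℕ) (k : ℕ) : ℤ :=
  if h : k / (L + 1) < r then c ⟨_, h⟩ + lam ⟨_, h⟩ (k % (L + 1)) - (k % (L + 1) : ℕ) - 1 else 0

/-- The position of row `x` of component `s`. -/
def idx {r : ℕ} (L : ℕ) (s : Fin r) (x : ℕ) : ℕ := (L + 1) * s + x

/-- The position of the row of a node. -/
def idn {r : ℕ} (L : ℕ) (C : Node r) : ℕ := idx L C.1 C.2.1

lemma idx_div {r L : ℕ} (s : Fin r) {x : ℕ} (hx : x ≤ L) : idx L s x / (L + 1) = s := by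
  unfold idx
  rw [Nat.mul_add_div (by omega), Nat.div_eq_of_lt (by omega)]; rfl

lemma idx_mod {r L : ℕ} (s : Fin r) {x : ℕ} (hx : x ≤ L) : idx L s x % (L + 1) = x := by
  unfold idx
  rw [Nat.mul_add_mod, Nat.mod_eq_of_lt (by omega)]

lemma wd_idx {r L : ℕ} (c : Fin r → ℤ) (lam : Fin r → ℕ → ℕ) (s : Fin r) {x : ℕ} (hx : x ≤ L) :
    wd L c lam (idx L s x) = c s + lam s x - x - 1 := by
  have h1 := idx_div s hx
  have h2 := idx_mod s hx
  have h3 : idx L s x / (L + 1) < r := by rw [h1]; exact s.2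
  have h4 : (⟨idx L s x / (L + 1), h3⟩ : Fin r) = s := Fin.ext h1
  rw [wd, dif_pos h3, h4, h2]

lemma mA_idx {r L : ℕ} (s : Fin r) {x : ℕ} (hx : x ≤ L) : mA r L (idx L s x) := by
  rw [mA, idx_div s hx]; exact s.2

lemma mR_idx {r L : ℕ} (s : Fin r) {x : ℕ} (hx : x ≤ L) : mR r L (idx L s x) ↔ x < L := by
  rw [mR, idx_div s hx, idx_mod s hx]; simp [s.2]

lemma exists_idx {r L k : ℕ} (h : mA r L k) : ∃ s : Fin r, ∃ x ≤ L, k = idx L s x := by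
  refine ⟨⟨_, h⟩, k % (L + 1), ?_, ?_⟩
  · have := Nat.mod_lt k (show 0 < L + 1 by omega); omega
  · exact (Nat.div_add_mod k (L + 1)).symm

lemma idx_inj {r L : ℕ} {s s' : Fin r} {x x' : ℕ} (hx : x ≤ L) (hx' : x' ≤ L)
    (h : idx L s x = idx L s' x') : s = s' ∧ x = x' := by
  constructor
  · apply Fin.ext
    rw [← idx_div s hx, ← idx_div s' hx', h]
  · rw [← idx_mod s hx, ← idx_mod s' hx', h]

lemma above_iff {r L : ℕ} {C D : Node r} (hC : C.2.1 ≤ L) (hD : D.2.1 ≤ L) :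
    NodeAbove C D ↔ idn L C < idn L D := by
  have key : ∀ {a b x y : ℕ}, x ≤ L → a < b → (L + 1) * a + x < (L + 1) * b + y := by
    intro a b x y hx hab
    have := Nat.mul_le_mul_left (L + 1) (show a + 1 ≤ b from hab)
    rw [Nat.mul_add] at this; omega
  unfold NodeAbove idn idx
  constructor
  · rintro (h | ⟨h1, h2⟩)
    · exact key hC h
    · rw [h1]; omega
  · intro h
    rcases lt_trichotomy C.1 D.1 with h' | h' | h'
    · exact Or.inl h'
    · rw [h'] at h
      exact Or.inr ⟨h', by omega⟩
    · have := key (x := D.2.1) (y := C.2.1) hD (show (D.1 : ℕ) < C.1 from h'); omega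

/-- Row `k` has an `i`-node with the property `P`. -/
def rowHas {e r : ℕ} (L : ℕ) (a : Fin r → ZMod e) (P : Node r → Prop) (i : ZMod e) (k : ℕ) : Prop :=
  ∃ C : Node r, P C ∧ res a C = i ∧ idn L C = k

lemma ncard_between {e r L : ℕ} {a : Fin r → ZMod e} {P : Node r → Prop} {i : ZMod e}
    (hP : ∀ C, P C → C.2.1 ≤ L)
    (hinj : ∀ C C', P C → P C' → C.1 = C'.1 → C.2.1 = C'.2.1 → C = C')
    {A B : Node r} (hA : A.2.1 ≤ L) (hB : B.2.1 ≤ L) :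
    Set.ncard {C : Node r | P C ∧ res a C = i ∧ NodeAbove A C ∧ NodeAbove C B} =
      ((Finset.Ico (idn L A + 1) (idn L B)).filter (rowHas L a P i)).card := by
  have : (((Finset.Ico (idn L A + 1) (idn L B)).filter (rowHas L a P i) : Finset ℕ) : Set ℕ) =
      idn L '' {C : Node r | P C ∧ res a C = i ∧ NodeAbove A C ∧ NodeAbove C B} := by
    ext k
    simp only [Finset.coe_filter, Finset.mem_Ico, Set.mem_ofPred_eq, Set.mem_image]
    constructor
    · rintro ⟨⟨h1, h2⟩, C, hC, hi, rfl⟩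
      exact ⟨C, ⟨hC, hi, (above_iff hA (hP C hC)).2 (by omega), (above_iff (hP C hC) hB).2 h2⟩, rfl⟩
    · rintro ⟨C, ⟨hC, hi, h1, h2⟩, rfl⟩
      have h1 := (above_iff hA (hP C hC)).1 h1
      have h2 := (above_iff (hP C hC) hB).1 h2
      exact ⟨⟨by omega, h2⟩, C, hC, hi, rfl⟩
  rw [← Set.ncard_coe_finset, this, Set.InjOn.ncard_image]
  rintro C ⟨hC, -⟩ C' ⟨hC', -⟩ h
  obtain ⟨h1, h2⟩ := idx_inj (hP C hC) (hP C' hC') h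
  exact hinj C C' hC hC' h1 h2

lemma rem_le {r L : ℕ} {lam : Fin r → ℕ → ℕ} (h : IsMP L lam) {C : Node r}
    (hC : Removable lam C) : C.2.1 < L := by
  by_contra h'
  have := h.2 C.1 C.2.1 (by omega)
  have := hC.1
  omega

lemma add_le {r L : ℕ} {lam : Fin r → ℕ → ℕ} (h : IsMP L lam) {C : Node r}
    (hC : Addable lam C) : C.2.1 ≤ L := by
  by_contra h'
  have h1 := h.2 C.1 C.2.1 (by omega)
  have h2 := h.2 C.1 (C.2.1 - 1) (by omega)
  rcases hC.2 with h3 | h3 <;> omega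

lemma rem_inj {r : ℕ} {lam : Fin r → ℕ → ℕ} (C C' : Node r) (h : Removable lam C)
    (h' : Removable lam C') (h1 : C.1 = C'.1) (h2 : C.2.1 = C'.2.1) : C = C' := by
  have := h.1
  have := h'.1
  rw [← h1, ← h2] at this
  exact Prod.ext h1 (Prod.ext h2 (by omega))

lemma add_inj {r : ℕ} {lam : Fin r → ℕ → ℕ} (C C' : Node r) (h : Addable lam C)
    (h' : Addable lam C') (h1 : C.1 = C'.1) (h2 : C.2.1 = C'.2.1) : C = C' := by
  have := h.1
  have := h'.1
  rw [← h1, ← h2] at this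
  exact Prod.ext h1 (Prod.ext h2 (by omega))

/-- Blocked addable letters. -/
def bl {r : ℕ} (e L : ℕ) (c : Fin r → ℤ) (lam : Fin r → ℕ → ℕ) (d : ℤ) (k : ℕ) : Prop :=
  ∃ s : Fin r, ∃ x, x + 1 ≤ L ∧ k = idx L s (x + 1) ∧ lam s x = lam s (x + 1) ∧
    (e : ℤ) ∣ wd L c lam k + 1 - d

/-- True heights. -/
def tht {r : ℕ} (e L : ℕ) (c : Fin r → ℤ) (lam : Fin r → ℕ → ℕ) (d : ℤ) (k : ℕ) : ℤ :=
  ht e (mR r L) (mA r L) d (wd L c lam) k - if bl e L c lam d k then 1 else 0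

/-- The multicharge mod `e`. -/
def chg {r : ℕ} (e : ℕ) (c : Fin r → ℤ) : Fin r → ZMod e := fun s => ((c s : ℤ) : ZMod e)

lemma res_chg {e r : ℕ} (c : Fin r → ℤ) (C : Node r) (d : ℤ) :
    res (chg e c) C = (d : ZMod e) ↔ (e : ℤ) ∣ c C.1 - C.2.1 + C.2.2 - d := by
  have : res (chg e c) C = ((c C.1 - C.2.1 + C.2.2 : ℤ) : ZMod e) := by
    simp [res, chg]
  rw [this, eq_comm, ZMod.intCast_eq_intCast_iff_dvd_sub]

section rows
variable {e r L : ℕ} {c : Fin r → ℤ} {lam : Fin r → ℕ → ℕ}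

lemma rowR_idx (h : IsMP L lam) (d : ℤ) (s : Fin r) {x : ℕ} (hx : x ≤ L) :
    rowHas L (chg e c) (Removable lam) (d : ZMod e) (idx L s x) ↔
      x < L ∧ lam s (x + 1) < lam s x ∧ (e : ℤ) ∣ wd L c lam (idx L s x) - d := by
  rw [wd_idx c lam s hx]
  constructor
  · rintro ⟨⟨s', x', y⟩, hC, hr, hi⟩
    have hl := rem_le h hC
    obtain ⟨rfl, rfl⟩ := idx_inj hl.le hx hi
    rw [res_chg] at hr
    have h1 := hC.1
    have h2 := hC.2
    simp only at h1 h2 hl hr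
    refine ⟨hl, h2, ?_⟩
    rw [← h1]; push_cast
    convert hr using 1; ring
  · rintro ⟨hl, h1, h2⟩
    refine ⟨(s, x, lam s x - 1), ⟨?_, h1⟩, ?_, rfl⟩
    · show lam s x - 1 + 1 = lam s x
      omega
    · rw [res_chg]
      show (e : ℤ) ∣ c s - x + (lam s x - 1 : ℕ) - d
      rw [Nat.cast_sub (by omega)]
      convert h2 using 1; push_cast; ring

lemma rowA_idx (h : IsMP L lam) (d : ℤ) (s : Fin r) {x : ℕ} (hx : x ≤ L) :
    rowHas L (chg e c) (Addable lam) (d : ZMod e) (idx L s x) ↔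
      (x = 0 ∨ lam s x < lam s (x - 1)) ∧ (e : ℤ) ∣ wd L c lam (idx L s x) + 1 - d := by
  rw [wd_idx c lam s hx]
  constructor
  · rintro ⟨⟨s', x', y⟩, hC, hr, hi⟩
    have hl := add_le h hC
    obtain ⟨rfl, rfl⟩ := idx_inj hl hx hi
    rw [res_chg] at hr
    have h1 := hC.1
    have h2 := hC.2
    simp only at h1 h2 hl hr
    refine ⟨h2, ?_⟩
    rw [← h1]
    convert hr using 1; ring
  · rintro ⟨h1, h2⟩
    refine ⟨(s, x, lam s x), ⟨rfl, h1⟩, ?_, rfl⟩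
    rw [res_chg]
    show (e : ℤ) ∣ c s - x + (lam s x : ℕ) - d
    convert h2 using 1; ring

lemma not_mA_row {P : Node r → Prop} {a : Fin r → ZMod e} {i : ZMod e} (hP : ∀ C, P C → C.2.1 ≤ L)
    {k : ℕ} (hk : ¬ mA r L k) : ¬ rowHas L a P i k := by
  rintro ⟨C, hC, -, rfl⟩
  exact hk (mA_idx C.1 (hP C hC))

lemma bl_mA {d : ℤ} {k : ℕ} (h : bl e L c lam d k) : mA r L k := by
  obtain ⟨s, x, hx, rfl, -⟩ := h
  exact mA_idx s hx

lemma bl_idx (d : ℤ) (s : Fin r) {x : ℕ} (hx : x ≤ L) :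
    bl e L c lam d (idx L s x) ↔
      (x ≠ 0 ∧ lam s (x - 1) = lam s x) ∧ (e : ℤ) ∣ wd L c lam (idx L s x) + 1 - d := by
  constructor
  · rintro ⟨s', x', hx', h1, h2, h3⟩
    obtain ⟨rfl, rfl⟩ := idx_inj hx hx' h1
    exact ⟨⟨by omega, h2⟩, h3⟩
  · rintro ⟨⟨h1, h2⟩, h3⟩
    obtain ⟨y, rfl⟩ := Nat.exists_eq_succ_of_ne_zero h1
    exact ⟨s, y, hx, rfl, h2, h3⟩

lemma bl_idx_succ (d : ℤ) (s : Fin r) {x : ℕ} (hx : x ≤ L) :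
    bl e L c lam d (idx L s x + 1) ↔
      x < L ∧ lam s x = lam s (x + 1) ∧ (e : ℤ) ∣ wd L c lam (idx L s x) - d := by
  by_cases hl : x < L
  · have h1 : idx L s x + 1 = idx L s (x + 1) := rfl
    rw [h1, bl_idx d s hl, wd_idx c lam s hl, wd_idx c lam s hx]
    constructor
    · rintro ⟨⟨-, h2⟩, h3⟩
      have h2 : lam s x = lam s (x + 1) := h2
      refine ⟨hl, h2, ?_⟩
      rw [h2]; convert h3 using 1; push_cast; ring
    · rintro ⟨-, h2, h3⟩
      refine ⟨⟨by omega, h2⟩, ?_⟩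
      rw [← h2]; convert h3 using 1; push_cast; ring
  · have hxL : x = L := by omega
    constructor
    · rintro ⟨s', x', hx', h1, h2, h3⟩
      exfalso
      subst hxL
      have h4 := idx_mod s' hx'
      rw [← h1] at h4
      have h5 : idx x s x + 1 = (x + 1) * (s + 1) := by unfold idx; ring
      rw [h5, Nat.mul_mod_right] at h4
      omega
    · rintro ⟨h, -⟩; omega

lemma tht_succ (h : IsMP L lam) (d : ℤ) (k : ℕ) :
    tht e L c lam d (k + 1) = tht e L c lam d k +
      ((if rowHas L (chg e c) (Removable lam) (d : ZMod e) k then 1 else 0) -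
       (if rowHas L (chg e c) (Addable lam) (d : ZMod e) k then 1 else 0)) := by
  unfold tht
  rw [ht_succ]
  by_cases hk : mA r L k
  · obtain ⟨s, x, hx, rfl⟩ := exists_idx hk
    have h1 := h.1 s x (x + 1) (by omega)
    have h2 := h.1 s (x - 1) x (by omega)
    simp only [sg, rowR_idx h d s hx, rowA_idx h d s hx, bl_idx d s hx, bl_idx_succ d s hx, hk,
      true_and, mR_idx s hx]
    have hlt : lam s (x + 1) < lam s x ↔ ¬ lam s x = lam s (x + 1) := by omega
    have hlt2 : (x = 0 ∨ lam s x < lam s (x - 1)) ↔ ¬ (x ≠ 0 ∧ lam s (x - 1) = lam s x) := by omega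
    simp only [hlt, hlt2]
    generalize ht e (mR r L) (mA r L) d (wd L c lam) (idx L s x) = H
    by_cases q1 : x < L <;> by_cases q2 : lam s x = lam s (x + 1) <;>
      by_cases q4 : (e : ℤ) ∣ wd L c lam (idx L s x) - d <;>
      by_cases q5 : (e : ℤ) ∣ wd L c lam (idx L s x) + 1 - d <;>
      simp only [q1, q4, q5, not_true, not_false_iff, and_true, and_false,
        true_and, false_and, if_true, if_false] <;> (try split_ifs) <;> first | omega | (exfalso; tauto)
  · have hk1 : ¬ mA r L (k + 1) := by
      unfold mA at *
      have := Nat.div_le_div_right (c := L + 1) (show k ≤ k + 1 by omega)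
      omega
    have hR : ¬ mR r L k := fun h => hk h.1
    rw [if_neg (fun h => hk1 (bl_mA h)), if_neg (fun h => hk (bl_mA h)),
      if_neg (not_mA_row (fun C hC => (rem_le h hC).le) hk),
      if_neg (not_mA_row (fun C hC => add_le h hC) hk), sg, if_neg (fun h => hR h.1),
      if_neg (fun h => hk h.1)]
    ring

lemma tht_sub (h : IsMP L lam) (d : ℤ) {k m : ℕ} (hkm : k ≤ m) :
    tht e L c lam d m - tht e L c lam d k =
      (((Finset.Ico k m).filter (rowHas L (chg e c) (Removable lam) (d : ZMod e))).card : ℤ) -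
      ((Finset.Ico k m).filter (rowHas L (chg e c) (Addable lam) (d : ZMod e))).card := by
  induction m, hkm using Nat.le_induction with
  | base => simp
  | succ m hm ih =>
    rw [tht_succ h]
    simp only [Finset.card_filter, Finset.sum_Ico_succ_top hm, Nat.cast_add] at ih ⊢
    have : ∀ p : Prop, ((if p then 1 else 0 : ℕ) : ℤ) = if p then 1 else 0 := fun p => by
      split_ifs <;> rfl
    rw [this, this]
    linarith

lemma dvd_two (he : 2 ≤ e) {x : ℤ} (h : (e : ℤ) ∣ x) : ¬ (e : ℤ) ∣ x + 1 :=
  not_dvd_small (by omega) (by omega) h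

lemma rowRA (he : 2 ≤ e) (h : IsMP L lam) {d : ℤ} {k : ℕ}
    (hR : rowHas L (chg e c) (Removable lam) (d : ZMod e) k) :
    ¬ rowHas L (chg e c) (Addable lam) (d : ZMod e) k := by
  obtain ⟨C, hC, hi, rfl⟩ := hR
  intro hA
  have h1 := (rowR_idx (c := c) (e := e) h d C.1 (rem_le h hC).le).1 ⟨C, hC, hi, rfl⟩
  have h2 := (rowA_idx (c := c) (e := e) h d C.1 (rem_le h hC).le).1 hA
  exact dvd_two he h1.2.2 (by convert h2.2 using 1; ring)

lemma tht_succ_R (he : 2 ≤ e) (h : IsMP L lam) {d : ℤ} {k : ℕ}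
    (hR : rowHas L (chg e c) (Removable lam) (d : ZMod e) k) :
    tht e L c lam d (k + 1) = tht e L c lam d k + 1 := by
  rw [tht_succ h, if_pos hR, if_neg (rowRA he h hR)]; ring

lemma normal_fwd (h : IsMP L lam) {d : ℤ} {A : Node r}
    (hA : Normal (chg e c) lam A) (hd : res (chg e c) A = (d : ZMod e)) (m : ℕ)
    (hm : idn L A < m) : tht e L c lam d (idn L A + 1) ≤ tht e L c lam d m := by
  induction m, (show idn L A + 1 ≤ m from hm) using Nat.le_induction with
  | base => exact le_rfl
  | succ m hm' ih =>
    have ih := ih hm'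
    rw [tht_succ h d m]
    by_cases hB : rowHas L (chg e c) (Addable lam) (d : ZMod e) m
    · obtain ⟨B, hB1, hB2, rfl⟩ := id hB
      have hAl := (rem_le h hA.1).le
      have hBl := add_le h hB1
      have := hA.2 B hB1 (by rw [hB2, hd]) ((above_iff hAl hBl).2 (by omega))
      rw [ncard_between (P := Addable lam) (fun C hC => add_le h hC) add_inj hAl hBl,
        ncard_between (P := Removable lam) (fun C hC => (rem_le h hC).le) rem_inj hAl hBl, hd] at this
      have h2 := tht_sub (c := c) (e := e) h d hm'
      split_ifs <;> omega
    · rw [if_neg hB]; split_ifs <;> omega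

lemma normal_bwd (he : 2 ≤ e) (h : IsMP L lam) {d : ℤ} {A : Node r}
    (hA : Removable lam A) (hd : res (chg e c) A = (d : ZMod e))
    (hm : ∀ m, idn L A < m → tht e L c lam d (idn L A + 1) ≤ tht e L c lam d m) :
    Normal (chg e c) lam A := by
  refine ⟨hA, fun B hB1 hB2 hAB => ?_⟩
  have hAl := (rem_le h hA).le
  have hBl := add_le h hB1
  have hlt := (above_iff hAl hBl).1 hAB
  rw [ncard_between (P := Addable lam) (fun C hC => add_le h hC) add_inj hAl hBl,
    ncard_between (P := Removable lam) (fun C hC => (rem_le h hC).le) rem_inj hAl hBl, hd]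
  have h1 := tht_sub (c := c) (e := e) h d (show idn L A + 1 ≤ idn L B from hlt)
  have h2 := tht_sub (c := c) (e := e) h d (show idn L A + 1 ≤ idn L B + 1 by omega)
  have h3 := hm (idn L B + 1) (by omega)
  have h4 := hm (idn L B) (by omega)
  have hB : rowHas L (chg e c) (Addable lam) (d : ZMod e) (idn L B) := ⟨B, hB1, by rw [hB2, hd], rfl⟩
  have h5 := tht_succ (c := c) (e := e) h d (idn L B)
  rw [if_pos hB] at h5
  by_cases hR : rowHas L (chg e c) (Removable lam) (d : ZMod e) (idn L B)
  · exact absurd hB (rowRA he h hR)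
  · rw [if_neg hR] at h5
    omega

end rows

/-! ### Good nodes and good letters -/

section good
variable {e r L : ℕ} {c : Fin r → ℤ} {lam : Fin r → ℕ → ℕ}

lemma bl_facts (he : 2 ≤ e) {d : ℤ} {m : ℕ} (h : bl e L c lam d m) :
    ∃ p, m = p + 1 ∧
      ht e (mR r L) (mA r L) d (wd L c lam) m = ht e (mR r L) (mA r L) d (wd L c lam) p + 1 ∧
      ht e (mR r L) (mA r L) d (wd L c lam) (m + 1) =
        ht e (mR r L) (mA r L) d (wd L c lam) m - 1 := by
  obtain ⟨s, x, hx, rfl, h1, h2⟩ := h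
  have e1 := wd_idx c lam s hx
  have e2 := wd_idx c lam s (show x ≤ L by omega)
  have e3 : wd L c lam (idx L s x) = wd L c lam (idx L s (x + 1)) + 1 := by
    rw [e1, e2, h1]; push_cast; ring
  refine ⟨idx L s x, rfl, ?_, ?_⟩
  · rw [show idx L s (x + 1) = idx L s x + 1 from rfl, ht_succ]
    congr 1
    rw [← e3] at h2
    have h3 : ¬ (e : ℤ) ∣ wd L c lam (idx L s x) + 1 - d := fun h' =>
      dvd_two he h2 (by convert h' using 1; ring)
    rw [sg, if_pos ⟨(mR_idx s (by omega)).2 (by omega), h2⟩, if_neg (fun h => h3 h.2)]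
    rfl
  · rw [ht_succ]
    have h3 : ¬ (e : ℤ) ∣ wd L c lam (idx L s (x + 1)) - d := fun h' =>
      dvd_two he h' (by convert h2 using 1; ring)
    rw [sg, if_neg (fun h => h3 h.2), if_pos ⟨mA_idx s hx, h2⟩]
    ring

lemma tht_le (d : ℤ) (m : ℕ) :
    tht e L c lam d m ≤ ht e (mR r L) (mA r L) d (wd L c lam) m := by
  unfold tht; split_ifs <;> omega

lemma gd_good (he : 2 ≤ e) (h : IsMP L lam) {d : ℤ} {k : ℕ}
    (hg : Gd e (mR r L) (mA r L) d (wd L c lam) k) :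
    ∃ A, Good (chg e c) lam A ∧ res (chg e c) A = (d : ZMod e) ∧ idn L A = k := by
  have hs := AK.sg_pos hg.sg_pos
  obtain ⟨s, x, hx, rfl⟩ := exists_idx hs.1.1
  have hxL := (mR_idx s hx).1 hs.1
  have hnb1 : ¬ bl e L c lam d (idx L s x + 1) := by
    intro hb
    obtain ⟨p, -, -, h3⟩ := bl_facts he hb
    have := hg.ht_succ
    have := hg.2 (idx L s x + 1 + 1) (by omega)
    omega
  have hnb : ¬ bl e L c lam d (idx L s x) := by
    intro hb
    obtain ⟨p, hp, h3, -⟩ := bl_facts he hb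
    have := hg.1 p (by omega)
    omega
  have hge : ∀ m, ht e (mR r L) (mA r L) d (wd L c lam) (idx L s x) ≤ tht e L c lam d m := by
    intro m
    have hmin : ∀ m, ht e (mR r L) (mA r L) d (wd L c lam) (idx L s x) ≤
        ht e (mR r L) (mA r L) d (wd L c lam) m := fun m => by
      by_cases hm : m ≤ idx L s x
      · exact hg.1 m hm
      · exact (hg.2 m (by omega)).le
    unfold tht
    by_cases hb : bl e L c lam d m
    · obtain ⟨p, hp, h3, -⟩ := bl_facts he hb
      have := hmin p
      rw [if_pos hb]; omega
    · have := hmin m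
      rw [if_neg hb]; omega
  have hgt : ∀ m, idx L s x < m →
      ht e (mR r L) (mA r L) d (wd L c lam) (idx L s x) < tht e L c lam d m := by
    intro m hm
    unfold tht
    by_cases hb : bl e L c lam d m
    · obtain ⟨p, hp, -, h3⟩ := bl_facts he hb
      have := hg.2 (m + 1) (by omega)
      rw [if_pos hb]; omega
    · have := hg.2 m hm
      rw [if_neg hb]; omega
  have hne : ¬ lam s x = lam s (x + 1) := fun h' =>
    hnb1 ((bl_idx_succ d s hx).2 ⟨hxL, h', hs.2⟩)
  have hle := h.1 s x (x + 1) (by omega)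
  obtain ⟨C, hC, hi, hk⟩ := (rowR_idx (c := c) (e := e) h d s hx).2 ⟨hxL, by omega, hs.2⟩
  refine ⟨C, ⟨normal_bwd he h hC hi ?_, ?_⟩, hi, hk⟩
  · intro m hm
    rw [hk] at hm ⊢
    have h1 := tht_le (e := e) (c := c) (lam := lam) (L := L) d (idx L s x + 1)
    have h2 := hg.ht_succ
    have h3 := hgt m hm
    omega
  · intro B hB hBi hne
    have hBl := (rem_le h hB.1).le
    have hCl := (rem_le h hC).le
    rw [above_iff hCl hBl]
    by_contra hlt
    rcases lt_or_eq_of_le (not_lt.1 hlt) with hlt | heq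
    · rw [hk] at hlt
      have h1 := normal_fwd h hB (hBi.trans hi) _ hlt
      have h2 := tht_succ_R he h (c := c) (d := d) ⟨B, hB.1, hBi.trans hi, rfl⟩
      have h3 := hge (idn L B)
      have h4 := tht_le (e := e) (c := c) (lam := lam) (L := L) d (idx L s x)
      omega
    · obtain ⟨h1, h2⟩ := idx_inj hBl hCl heq
      exact hne (rem_inj _ _ hB.1 hC h1 h2)

lemma normal_gd (he : 2 ≤ e) (h : IsMP L lam) {d : ℤ} {A : Node r}
    (hA : Normal (chg e c) lam A) (hd : res (chg e c) A = (d : ZMod e)) :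
    ∃ k, Gd e (mR r L) (mA r L) d (wd L c lam) k := by
  have hrow : rowHas L (chg e c) (Removable lam) (d : ZMod e) (idn L A) := ⟨A, hA.1, hd, rfl⟩
  have hAl := (rem_le h hA.1).le
  have hR := (rowR_idx h d A.1 hAl).1 hrow
  have hnb : ¬ bl e L c lam d (idn L A) := fun hb => by
    have := (bl_idx d A.1 hAl).1 hb
    exact dvd_two he hR.2.2 (by convert this.2 using 1; ring)
  have h0 : tht e L c lam d (idn L A) = ht e (mR r L) (mA r L) d (wd L c lam) (idn L A) := by
    unfold tht; rw [if_neg hnb]; ring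
  have h1 := tht_succ_R he h hrow
  have hgt : ∀ m, idn L A < m → ht e (mR r L) (mA r L) d (wd L c lam) (idn L A) <
      ht e (mR r L) (mA r L) d (wd L c lam) m := fun m hm => by
    have := normal_fwd h hA hd m hm
    have := tht_le (e := e) (c := c) (lam := lam) (L := L) d m
    omega
  obtain ⟨k, hk, hk'⟩ := Finset.exists_min_image (Finset.range (idn L A + 1))
    (ht e (mR r L) (mA r L) d (wd L c lam)) ⟨0, by simp⟩
  simp only [Finset.mem_range] at hk hk'
  obtain ⟨u, hu, hu1, hu2⟩ := exists_last
    (fun m => ht e (mR r L) (mA r L) d (wd L c lam) m = ht e (mR r L) (mA r L) d (wd L c lam) k)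
    (idn L A) ⟨k, by omega, rfl⟩
  have hu1 : ht e (mR r L) (mA r L) d (wd L c lam) u = ht e (mR r L) (mA r L) d (wd L c lam) k := hu1
  refine ⟨u, fun m hm => ?_, fun m hm => ?_⟩
  · rw [hu1]; exact hk' m (by omega)
  · by_cases hm' : m ≤ idn L A
    · have h2 := hk' m (by omega)
      have h3 : ¬ (ht e (mR r L) (mA r L) d (wd L c lam) m =
        ht e (mR r L) (mA r L) d (wd L c lam) k) := hu2 m hm' hm
      omega
    · have h2 := hgt m (by omega)
      have h3 := hk' (idn L A) (by omega)
      omega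

lemma above_irrefl2 {C D : Node r} (h1 : NodeAbove C D) (h2 : NodeAbove D C) : False := by
  have := (above_iff (L := max C.2.1 D.2.1) (le_max_left _ _) (le_max_right _ _)).1 h1
  have := (above_iff (L := max C.2.1 D.2.1) (le_max_right _ _) (le_max_left _ _)).1 h2
  omega

lemma good_gd (he : 2 ≤ e) (h : IsMP L lam) {d : ℤ} {A : Node r}
    (hA : Good (chg e c) lam A) (hd : res (chg e c) A = (d : ZMod e)) :
    Gd e (mR r L) (mA r L) d (wd L c lam) (idn L A) := by
  obtain ⟨k, hk⟩ := normal_gd he h hA.1 hd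
  obtain ⟨A', hA', hd', rfl⟩ := gd_good he h hk
  have : A' = A := by
    by_contra hne
    exact above_irrefl2 (hA.2 A' hA'.1 (hd'.trans hd.symm) hne)
      (hA'.2 A hA.1 (hd.trans hd'.symm) (Ne.symm hne))
  rwa [this] at hk

lemma isMP_remove (h : IsMP L lam) {A : Node r} (hA : Removable lam A) :
    IsMP L (removeNode lam A) := by
  constructor
  · intro s x y hxy
    have h1 := h.1 s x y hxy
    unfold removeNode
    split_ifs with hy hx hx
    · omega
    · omega
    · obtain ⟨rfl, rfl⟩ := hx
      have hlt : A.2.1 < y := lt_of_le_of_ne hxy (fun h => hy ⟨rfl, h.symm⟩)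
      have h2 := h.1 A.1 (A.2.1 + 1) y hlt
      have h3 := hA.2
      omega
    · exact h1
  · intro s x hx
    have := h.2 s x hx
    unfold removeNode
    split_ifs <;> omega

lemma wd_remove (h : IsMP L lam) {A : Node r} (hA : Removable lam A) :
    wd L c (removeNode lam A) = dec (wd L c lam) (idn L A) := by
  funext k
  have hAl := (rem_le h hA).le
  rw [dec_apply]
  by_cases hk : mA r L k
  · obtain ⟨s, x, hx, rfl⟩ := exists_idx hk
    rw [wd_idx _ _ _ hx, wd_idx _ _ _ hx]
    by_cases hp : s = A.1 ∧ x = A.2.1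
    · have h1 : idx L s x = idn L A := by rw [hp.1, hp.2]; rfl
      have h2 := hA.1
      rw [if_pos h1, removeNode, if_pos hp, hp.1, hp.2, ← h2]
      push_cast
      ring
    · have h1 : ¬ idx L s x = idn L A := fun h' => hp (idx_inj hx hAl h')
      rw [if_neg h1, removeNode, if_neg hp]
      ring
  · have h1 : ¬ k = idn L A := fun h' => hk (h' ▸ mA_idx A.1 hAl)
    unfold mA at hk
    rw [if_neg h1, wd, wd, dif_neg hk, dif_neg hk]
    ring

lemma mRA (r L k : ℕ) (h : mR r L k) : mA r L k := h.1

lemma isMP_zero (r L : ℕ) : IsMP L (fun (_ : Fin r) (_ : ℕ) => 0) :=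
  ⟨fun _ _ _ _ => le_rfl, fun _ _ _ => rfl⟩

lemma sink (he : 2 ≤ e) (L : ℕ) (c : Fin r → ℤ) (u : ℕ → ℤ) :
    ¬ Stp (2 * e) (dm (mR r L)) (dm (mA r L)) (dbl e (wd L c fun _ _ => 0)) u := by
  rintro ⟨d, k, hg, -⟩
  obtain ⟨A, hA, -⟩ := gd_good he (isMP_zero r L) (gd_dbl he hg)
  exact absurd hA.1.1.1 (Nat.succ_ne_zero _)

lemma wd_inj (h : IsMP L lam) {mu : Fin r → ℕ → ℕ} (h' : IsMP L mu)
    (hw : wd L c lam = wd L c mu) : lam = mu := by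
  funext s x
  by_cases hx : x ≤ L
  · have := congrFun hw (idx L s x)
    rw [wd_idx _ _ _ hx, wd_idx _ _ _ hx] at this
    omega
  · rw [h.2 s x (by omega), h'.2 s x (by omega)]

lemma kl_rch (he : 2 ≤ e) (hk : IsKleshchev (chg e c) lam) : IsMP L lam →
    ∃ m, Rch (2 * e) (dm (mR r L)) (dm (mA r L)) m (dbl e (wd L c lam))
      (dbl e (wd L c fun _ _ => 0)) := by
  induction hk with
  | empty => exact fun _ => ⟨0, rfl⟩
  | step lam A hA _ ih =>
    intro h
    obtain ⟨m, hm⟩ := ih (isMP_remove h hA.1.1)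
    obtain ⟨d, hd⟩ := ZMod.intCast_surjective (res (chg e c) A)
    have hg := good_gd he h hA hd.symm
    obtain ⟨u, hu1, hu2⟩ := stp_dbl he (mRA r L) hg
    rw [wd_remove h hA.1.1] at hm
    exact ⟨m + 2, u, hu1, _, hu2, hm⟩

lemma rch_step (he : 2 ≤ e) (h : IsMP L lam) {A : Node r} (hA : Good (chg e c) lam A) {m : ℕ}
    (hm : Rch (2 * e) (dm (mR r L)) (dm (mA r L)) m (dbl e (wd L c lam))
      (dbl e (wd L c fun _ _ => 0))) :
    ∃ m' < m, Rch (2 * e) (dm (mR r L)) (dm (mA r L)) m' (dbl e (wd L c (removeNode lam A)))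
      (dbl e (wd L c fun _ _ => 0)) := by
  obtain ⟨d, hd⟩ := ZMod.intCast_surjective (res (chg e c) A)
  have hg := good_gd he h hA hd.symm
  obtain ⟨u, hu1, hu2⟩ := stp_dbl he (mRA r L) hg
  have hRA : ∀ k, dm (mR r L) k → dm (mA r L) k := fun k => mRA r L _
  obtain ⟨m1, rfl, hm1⟩ := rch_closed (by omega) hRA (sink he L c) m _ hm _ hu1
  obtain ⟨m2, rfl, hm2⟩ := rch_closed (by omega) hRA (sink he L c) m1 _ hm1 _ hu2
  rw [wd_remove h hA.1.1]
  exact ⟨m2, by omega, hm2⟩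

lemma rch_kl (he : 2 ≤ e) (m : ℕ) : ∀ lam : Fin r → ℕ → ℕ, IsMP L lam →
    Rch (2 * e) (dm (mR r L)) (dm (mA r L)) m (dbl e (wd L c lam))
      (dbl e (wd L c fun _ _ => 0)) → IsKleshchev (chg e c) lam := by
  induction m using Nat.strong_induction_on with
  | _ m ih =>
    intro lam h hm
    cases m with
    | zero =>
      have hm : dbl e (wd L c lam) = dbl e (wd L c fun _ _ => 0) := hm
      have : wd L c lam = wd L c (fun _ _ => 0) := by
        funext k
        have := congrFun hm (2 * k)
        rwa [dbl_even, dbl_even] at this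
      rw [wd_inj h (isMP_zero r L) this]
      exact IsKleshchev.empty
    | succ m =>
      obtain ⟨u, ⟨d, k, hg, -⟩, -⟩ := id hm
      obtain ⟨A, hA, -⟩ := gd_good he h (gd_dbl he hg)
      obtain ⟨m', hlt, hm'⟩ := rch_step he h hA hm
      exact IsKleshchev.step lam A hA (ih m' hlt _ (isMP_remove h hA.1.1) hm')

/-- Removing a good node preserves (non-)Kleshchevness. -/
lemma kl_good (he : 2 ≤ e) (h : IsMP L lam) {A : Node r} (hA : Good (chg e c) lam A) :
    IsKleshchev (chg e c) lam ↔ IsKleshchev (chg e c) (removeNode lam A) := by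
  constructor
  · intro hk
    obtain ⟨m, hm⟩ := kl_rch (L := L) he hk h
    obtain ⟨m', -, hm'⟩ := rch_step he h hA hm
    exact rch_kl he m' _ (isMP_remove h hA.1.1) hm'
  · exact IsKleshchev.step lam A hA

end good

/-! ### The ladder lemma -/

lemma zmod_one_ne {e : ℕ} (he : 2 ≤ e) : (1 : ZMod e) ≠ 0 := by
  have : Fact (1 < e) := ⟨he⟩
  exact one_ne_zero

lemma ladder {e r L : ℕ} (he : 2 ≤ e) (c : Fin r → ℤ) (i : ZMod e) (mu : Fin r → ℕ → ℕ)
    (hmu : IsMP L mu) (n : ℕ) : ∀ lam : Fin r → ℕ → ℕ, IsMP L lam →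
    (∀ s x, lam s x = mu s x ∨ (lam s x = mu s x + 1 ∧ res (chg e c) (s, x, mu s x) = i)) →
    (∀ C, Removable lam C → res (chg e c) C = i → lam C.1 C.2.1 ≠ mu C.1 C.2.1) →
    (∀ C, Addable lam C → res (chg e c) C = i → ∀ s x, lam s x ≠ mu s x → NodeAbove C (s, x, 0)) →
    (∑ s : Fin r, ∑ x ∈ Finset.range L, lam s x) = n →
    (IsKleshchev (chg e c) lam ↔ IsKleshchev (chg e c) mu) := by
  have h10 := zmod_one_ne he
  induction n using Nat.strong_induction_on with
  | _ n ih =>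
    intro lam hlam hdiff hrem hadd hn
    by_cases hex : ∃ k, ∃ s x, idx L s x = k ∧ lam s x ≠ mu s x
    swap
    · have : lam = mu := by
        funext s x
        by_contra hne
        exact hex ⟨_, s, x, rfl, hne⟩
      rw [this]
    have hmin := fun k => Nat.find_min' hex (m := k)
    obtain ⟨s, x, hk, hne⟩ := Nat.find_spec hex
    rw [← hk] at hmin
    have hltL : ∀ s x, lam s x ≠ mu s x → x < L := fun s x h => by
      by_contra hx
      exact h (by rw [hlam.2 s x (by omega), hmu.2 s x (by omega)])
    have hxL := hltL s x hne
    obtain ⟨hl, hres⟩ := (hdiff s x).resolve_left hne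
    have hA : Removable lam (s, x, mu s x) := by
      refine ⟨hl.symm, ?_⟩
      show lam s (x + 1) < lam s x
      by_contra hge
      have h1 := hmu.1 s x (x + 1) (by omega)
      rcases hdiff s (x + 1) with h2 | ⟨h2, h3⟩
      · omega
      · have h4 : mu s (x + 1) = mu s x := by omega
        rw [h4] at h3
        apply h10
        simp only [res] at hres h3
        push_cast at h3
        linear_combination hres - h3
    have hab : ∀ s' x', lam s' x' ≠ mu s' x' → ¬ (s' = s ∧ x' = x) → ∀ y y',
        NodeAbove (s, x, y) (s', x', y') := by
      intro s' x' hd hne' y y'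
      have h1 := hltL s' x' hd
      rw [above_iff (L := L) hxL.le h1.le]
      refine lt_of_le_of_ne (hmin _ ⟨s', x', rfl, hd⟩) (fun h => ?_)
      obtain ⟨rfl, rfl⟩ := idx_inj hxL.le h1.le h
      exact hne' ⟨rfl, rfl⟩
    have hgood : Good (chg e c) lam (s, x, mu s x) := by
      refine ⟨⟨hA, fun B hB hBi hAB => ?_⟩, fun B hB hBi hBA => ?_⟩
      · have h1 := hadd B hB (hBi.trans hres) s x hne
        exact (above_irrefl2 (C := B) (D := (s, x, mu s x)) h1 hAB).elim
      · refine hab B.1 B.2.1 (hrem B hB.1 (hBi.trans hres)) ?_ _ B.2.2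
        rintro ⟨h1, h2⟩
        exact hBA (rem_inj _ _ hB.1 hA h1 h2)
    rw [kl_good he hlam hgood]
    have hval : removeNode lam (s, x, mu s x) s x = mu s x := by
      simp [removeNode, hl]
    have hval' : ∀ s' x', ¬ (s' = s ∧ x' = x) →
        removeNode lam (s, x, mu s x) s' x' = lam s' x' := fun s' x' h => by
      simp only [removeNode]; rw [if_neg h]
    have hle : ∀ s' x', removeNode lam (s, x, mu s x) s' x' ≤ lam s' x' := fun s' x' => by
      unfold removeNode; split_ifs <;> omega
    have hdiff' : ∀ s' x', removeNode lam (s, x, mu s x) s' x' ≠ mu s' x' →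
        ¬ (s' = s ∧ x' = x) ∧ lam s' x' ≠ mu s' x' := by
      intro s' x' h
      by_cases hp : s' = s ∧ x' = x
      · exact absurd (by rw [hp.1, hp.2, hval]) h
      · rw [hval' _ _ hp] at h
        exact ⟨hp, h⟩
    refine ih _ ?_ _ (isMP_remove hlam hA) ?_ ?_ ?_ rfl
    · rw [← hn]
      refine Finset.sum_lt_sum (fun s' _ => Finset.sum_le_sum fun x' _ => hle s' x')
        ⟨s, Finset.mem_univ _, Finset.sum_lt_sum (fun x' _ => hle s x')
          ⟨x, Finset.mem_range.2 hxL, ?_⟩⟩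
      rw [hval, hl]; omega
    · intro s' x'
      by_cases hp : s' = s ∧ x' = x
      · left; rw [hp.1, hp.2, hval]
      · rw [hval' _ _ hp]; exact hdiff s' x'
    · rintro ⟨s', x', y'⟩ hC hi
      obtain ⟨hC1, hC2⟩ := hC
      simp only at hC1 hC2 ⊢
      by_cases hp : s' = s ∧ x' = x
      · exfalso
        obtain ⟨rfl, rfl⟩ := hp
        rw [hval] at hC1
        apply h10
        simp only [res] at hres hi
        rw [← hC1] at hres
        push_cast at hres
        linear_combination hres - hi
      · rw [hval' _ _ hp] at hC1 hC2 ⊢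
        by_cases hR : lam s' (x' + 1) < lam s' x'
        · exact hrem (s', x', y') ⟨hC1, hR⟩ hi
        · exfalso
          by_cases hp' : s' = s ∧ x' + 1 = x
          · obtain ⟨rfl, rfl⟩ := hp'
            have h1 := hlam.1 s' x' (x' + 1) (by omega)
            have h2 : y' = mu s' (x' + 1) := by omega
            apply h10
            simp only [res] at hres hi
            rw [← h2] at hres
            push_cast at hres
            linear_combination hi - hres
          · rw [hval' _ _ hp'] at hC2
            exact hR hC2
    · rintro ⟨s', x', y'⟩ hC hi s2 x2 hd
      obtain ⟨hp2, hd2⟩ := hdiff' s2 x2 hd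
      by_cases hp : s' = s ∧ x' = x
      · obtain ⟨rfl, rfl⟩ := hp
        exact hab s2 x2 hd2 hp2 _ _
      · obtain ⟨hC1, hC2⟩ := hC
        simp only at hC1 hC2
        rw [hval' _ _ hp] at hC1 hC2
        refine hadd (s', x', y') ⟨hC1, ?_⟩ hi s2 x2 hd2
        rcases hC2 with h | h
        · exact Or.inl h
        · exact Or.inr (lt_of_lt_of_le h (hle _ _))

/-! ### β-sets -/

/-- `t` is the decreasing enumeration of `T`, and `T` has charge `c`. -/
def BE (T : Set ℤ) (c : ℤ) (t : ℕ → ℤ) : Prop :=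
  StrictAnti t ∧ Set.range t = T ∧ ∃ N : ℕ, ∀ x : ℕ, N ≤ x → t x = c - 1 - x

lemma enum_unique {T : Set ℤ} {t t' : ℕ → ℤ} (h : StrictAnti t) (h' : StrictAnti t')
    (hr : Set.range t = T) (hr' : Set.range t' = T) : t = t' := by
  have h1 : StrictMono (fun x => - t x) := fun x y hxy => neg_lt_neg (h hxy)
  have h2 : StrictMono (fun x => - t' x) := fun x y hxy => neg_lt_neg (h' hxy)
  have h3 : Set.range (fun x => - t x) = Set.range (fun x => - t' x) := by
    ext z
    have : -z ∈ Set.range t ↔ -z ∈ Set.range t' := by rw [hr, hr']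
    simp only [Set.mem_range] at this ⊢
    simpa only [neg_eq_iff_eq_neg] using this
  have h4 := (StrictMono.range_inj h1 h2).1 h3
  funext x
  have := congrFun h4 x
  simpa using this

lemma BE.unique {T : Set ℤ} {c c' : ℤ} {t t' : ℕ → ℤ} (h : BE T c t) (h' : BE T c' t') :
    t = t' ∧ c = c' := by
  have ht := enum_unique h.1 h'.1 h.2.1 h'.2.1
  refine ⟨ht, ?_⟩
  obtain ⟨N, hN⟩ := h.2.2
  obtain ⟨N', hN'⟩ := h'.2.2
  have h1 := hN (max N N') (le_max_left _ _)
  have h2 := hN' (max N N') (le_max_right _ _)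
  rw [ht] at h1
  omega

section enum
variable {T : Set ℤ} {a b : ℤ}

lemma tEnum_aux (ha : ∀ z < a, z ∈ T) (hb : ∀ z ∈ T, z < b) (x : ℕ) :
    (tEnum T x ∈ T) ∧ (tEnum T (x + 1) ∈ T) ∧ tEnum T (x + 1) < tEnum T x ∧
      ∀ z ∈ T, z < tEnum T x → z ≤ tEnum T (x + 1) := by
  have hbdd : BddAbove T := ⟨b, fun z hz => (hb z hz).le⟩
  have key : ∀ y, (T ∩ Set.Iio y).Nonempty := fun y =>
    ⟨min a y - 1, ha _ (by have := min_le_left a y; omega), by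
      have := min_le_right a y; simp only [Set.mem_Iio]; omega⟩
  have hbdd' : ∀ y, BddAbove (T ∩ Set.Iio y) := fun y => hbdd.mono Set.inter_subset_left
  have h0 : tEnum T x ∈ T := by
    cases x with
    | zero => exact Int.csSup_mem ⟨a - 1, ha _ (by omega)⟩ hbdd
    | succ x => exact (Int.csSup_mem (key (tEnum T x)) (hbdd' _)).1
  have h1 := Int.csSup_mem (key (tEnum T x)) (hbdd' _)
  refine ⟨h0, h1.1, h1.2, fun z hz hlt => le_csSup (hbdd' _) ⟨hz, hlt⟩⟩

lemma tEnum_anti (ha : ∀ z < a, z ∈ T) (hb : ∀ z ∈ T, z < b) : StrictAnti (tEnum T) :=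
  strictAnti_nat_of_succ_lt fun x => (tEnum_aux ha hb x).2.2.1

lemma anti_le {t : ℕ → ℤ} (h : StrictAnti t) (x : ℕ) : t x ≤ t 0 - x := by
  induction x with
  | zero => simp
  | succ x ih =>
    have := h (Nat.lt_succ_self x)
    push_cast
    simp only [Nat.succ_eq_add_one] at this
    omega

lemma tEnum_range (ha : ∀ z < a, z ∈ T) (hb : ∀ z ∈ T, z < b) : Set.range (tEnum T) = T := by
  apply Set.Subset.antisymm
  · rintro _ ⟨x, rfl⟩
    exact (tEnum_aux ha hb x).1
  · intro z hz
    have hex : ∃ x, tEnum T x ≤ z := by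
      refine ⟨(tEnum T 0 - z).toNat, ?_⟩
      have := anti_le (tEnum_anti ha hb) (tEnum T 0 - z).toNat
      omega
    have hspec := Nat.find_spec hex
    have hmin := fun m => Nat.find_min hex (m := m)
    refine ⟨Nat.find hex, le_antisymm hspec ?_⟩
    revert hspec hmin
    generalize Nat.find hex = n
    intro hspec hmin
    cases n with
    | zero => exact le_csSup ⟨b, fun z hz => (hb z hz).le⟩ hz
    | succ n =>
      have := hmin n (by omega)
      exact (tEnum_aux ha hb n).2.2.2 z hz (by omega)

lemma tEnum_tail (ha : ∀ z < a, z ∈ T) (hb : ∀ z ∈ T, z < b) :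
    ∃ x0 : ℕ, BE T (a + x0) (tEnum T) ∧ tEnum T x0 = a - 1 := by
  have hm : a - 1 ∈ Set.range (tEnum T) := by rw [tEnum_range ha hb]; exact ha _ (by omega)
  obtain ⟨x0, hx0⟩ := hm
  refine ⟨x0, ⟨tEnum_anti ha hb, tEnum_range ha hb, x0, fun x hx => ?_⟩, hx0⟩
  induction x, hx using Nat.le_induction with
  | base => rw [hx0]; ring
  | succ x hx ih =>
    have h1 := tEnum_aux ha hb x
    have h2 := h1.2.2.2 (tEnum T x - 1) (ha _ (by omega)) (by omega)
    have h3 := h1.2.2.1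
    push_cast
    omega

lemma tEnum_count (ha : ∀ z < a, z ∈ T) (hb : ∀ z ∈ T, z < b) (F : Finset ℤ)
    (hF : ∀ z, z ∈ F ↔ z ∈ T ∧ a ≤ z) : BE T (a + F.card) (tEnum T) := by
  obtain ⟨x0, h1, h2⟩ := tEnum_tail ha hb
  have hanti := tEnum_anti ha hb
  have hc : F.card = x0 := by
    have : F = (Finset.range x0).image (tEnum T) := by
      ext z
      rw [hF, Finset.mem_image]
      constructor
      · rintro ⟨hz, haz⟩
        rw [← tEnum_range ha hb] at hz
        obtain ⟨x, rfl⟩ := hz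
        refine ⟨x, Finset.mem_range.2 ?_, rfl⟩
        rw [← hanti.lt_iff_gt]
        omega
      · rintro ⟨x, hx, rfl⟩
        refine ⟨(tEnum_aux ha hb x).1, ?_⟩
        have := hanti (Finset.mem_range.1 hx)
        omega
    rw [this, Finset.card_image_of_injective _ hanti.injective, Finset.card_range]
  rw [hc]; exact h1

end enum

/-- The partition with charge `c` and enumeration `t`. -/
def pp (c : ℤ) (t : ℕ → ℤ) (x : ℕ) : ℕ := (t x + (x + 1) - c).toNat

lemma BE.pp_eq {T : Set ℤ} {c : ℤ} {t : ℕ → ℤ} (h : BE T c t) (x : ℕ) :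
    ((pp c t x : ℕ) : ℤ) = t x + (x + 1) - c := by
  have hanti : ∀ y, x ≤ y → t y + y ≤ t x + x := by
    intro y hy
    induction y, hy using Nat.le_induction with
    | base => exact le_rfl
    | succ y hy ih =>
      have := h.1 (Nat.lt_succ_self y)
      simp only [Nat.succ_eq_add_one] at this
      push_cast
      omega
  obtain ⟨N, hN⟩ := h.2.2
  have h1 := hanti (max N x) (le_max_right _ _)
  have h2 := hN (max N x) (le_max_left _ _)
  unfold pp
  omega

lemma isMP_pp {r : ℕ} {T : Fin r → Set ℤ} {c : Fin r → ℤ} {t : Fin r → ℕ → ℤ}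
    (h : ∀ s, BE (T s) (c s) (t s)) : ∃ L0, ∀ L, L0 ≤ L → IsMP L (fun s => pp (c s) (t s)) := by
  choose N hN using fun s => (h s).2.2
  refine ⟨Finset.univ.sup N, fun L hL => ⟨fun s x y hxy => ?_, fun s x hx => ?_⟩⟩
  · induction y, hxy using Nat.le_induction with
    | base => exact le_rfl
    | succ y hy ih =>
      refine le_trans ?_ ih
      have h1 := (h s).1 (Nat.lt_succ_self y)
      have h2 := (h s).pp_eq y
      have h3 := (h s).pp_eq (y + 1)
      simp only [Nat.succ_eq_add_one] at h1
      push_cast at h3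
      show pp (c s) (t s) (y + 1) ≤ pp (c s) (t s) y
      omega
  · have h1 : N s ≤ Finset.univ.sup N := Finset.le_sup (Finset.mem_univ s)
    have h2 := hN s x (by omega)
    show pp (c s) (t s) x = 0
    unfold pp
    omega

/-- Reflection of a β-set. -/
def refl (e : ℕ) (j : ℤ) (T : Set ℤ) : Set ℤ :=
  {z | if (e : ℤ) ∣ z - j then z - 1 ∈ T else if (e : ℤ) ∣ z + 1 - j then z + 1 ∈ T else z ∈ T}

/-- Reflected enumeration. -/
def reflE (e : ℕ) (j : ℤ) (T : Set ℤ) (t : ℕ → ℤ) (x : ℕ) : ℤ :=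
  if (e : ℤ) ∣ t x - j ∧ t x - 1 ∉ T then t x - 1 else t x

lemma reflE_le (e : ℕ) (j : ℤ) (T : Set ℤ) (t : ℕ → ℤ) (x : ℕ) :
    reflE e j T t x ≤ t x ∧ t x - 1 ≤ reflE e j T t x := by
  unfold reflE; split_ifs <;> omega

lemma refl_BE {e : ℕ} (he : 2 ≤ e) {j : ℤ} {T : Set ℤ} {c : ℤ} {t : ℕ → ℤ} (h : BE T c t)
    (hadd : ∀ z ∈ T, (e : ℤ) ∣ z + 1 - j → z + 1 ∈ T) : BE (refl e j T) c (reflE e j T t) := by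
  obtain ⟨hanti, hr, N, hN⟩ := h
  have hmem : ∀ x, t x ∈ T := fun x => hr ▸ ⟨x, rfl⟩
  have hshift : ∀ z : ℤ, (e : ℤ) ∣ z - j → ¬ (e : ℤ) ∣ z + 1 - j := fun z h1 h2 =>
    dvd_two he h1 (by convert h2 using 1; ring)
  refine ⟨fun x y hxy => ?_, ?_, N, fun x hx => ?_⟩
  · have h1 := hanti hxy
    have h2 := reflE_le e j T t y
    by_cases hx : (e : ℤ) ∣ t x - j ∧ t x - 1 ∉ T
    · have h3 : reflE e j T t x = t x - 1 := by rw [reflE, if_pos hx]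
      have h4 : t y ≠ t x - 1 := fun h => hx.2 (h ▸ hmem y)
      omega
    · have h3 : reflE e j T t x = t x := by rw [reflE, if_neg hx]
      omega
  · ext z
    constructor
    · rintro ⟨x, rfl⟩
      have hx := hmem x
      by_cases hp : (e : ℤ) ∣ t x - j ∧ t x - 1 ∉ T
      · rw [reflE, if_pos hp]
        have h1 : (e : ℤ) ∣ t x - 1 + 1 - j := by simpa using hp.1
        have h2 : ¬ (e : ℤ) ∣ t x - 1 - j := fun h' => hshift _ h' h1
        show if _ then _ else _
        rw [if_neg h2, if_pos h1]
        simpa using hx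
      · rw [reflE, if_neg hp]
        show if _ then _ else _
        split_ifs with h1 h2
        · by_contra h3; exact hp ⟨h1, h3⟩
        · exact hadd _ hx h2
        · exact hx
    · intro hz
      have hz : if (e : ℤ) ∣ z - j then z - 1 ∈ T else
        if (e : ℤ) ∣ z + 1 - j then z + 1 ∈ T else z ∈ T := hz
      split_ifs at hz with h1 h2
      · have h3 : z ∈ T := by simpa using hadd _ hz (by simpa using h1)
        obtain ⟨x, rfl⟩ : z ∈ Set.range t := hr ▸ h3
        exact ⟨x, by rw [reflE, if_neg (fun h => h.2 hz)]⟩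
      · by_cases h3 : z ∈ T
        · obtain ⟨x, rfl⟩ : z ∈ Set.range t := hr ▸ h3
          exact ⟨x, by rw [reflE, if_neg (fun h => h1 h.1)]⟩
        · obtain ⟨x, hx⟩ : z + 1 ∈ Set.range t := hr ▸ hz
          refine ⟨x, ?_⟩
          rw [reflE, if_pos ⟨by rw [hx]; exact h2, by rw [hx]; simpa using h3⟩, hx]; ring
      · obtain ⟨x, rfl⟩ : z ∈ Set.range t := hr ▸ hz
        exact ⟨x, by rw [reflE, if_neg (fun h => h1 h.1)]⟩
  · have h1 := hN x hx
    have h2 := hN (x + 1) (by omega)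
    push_cast at h2
    have h3 := hmem (x + 1)
    rw [reflE, if_neg (fun h => h.2 (by convert h3 using 1; omega))]
    exact h1

lemma kl_refl {e r : ℕ} (he : 2 ≤ e) {j : ℤ} {T : Fin r → Set ℤ} {c : Fin r → ℤ}
    {t : Fin r → ℕ → ℤ} (h : ∀ s, BE (T s) (c s) (t s))
    (hadd : ∀ s, ∀ z ∈ T s, (e : ℤ) ∣ z + 1 - j → z + 1 ∈ T s) :
    IsKleshchev (chg e c) (fun s => pp (c s) (t s)) ↔
      IsKleshchev (chg e c) (fun s => pp (c s) (reflE e j (T s) (t s))) := by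
  have h' := fun s => refl_BE he (h s) (hadd s)
  obtain ⟨L1, hL1⟩ := isMP_pp h
  obtain ⟨L2, hL2⟩ := isMP_pp h'
  refine ladder (L := max L1 L2) he c (j : ZMod e) _ (hL2 _ (le_max_right _ _)) _ _
    (hL1 _ (le_max_left _ _)) ?_ ?_ ?_ rfl
  · intro s x
    have e1 := (h s).pp_eq x
    have e2 := (h' s).pp_eq x
    by_cases hp : (e : ℤ) ∣ t s x - j ∧ t s x - 1 ∉ T s
    · right
      have h3 : reflE e j (T s) (t s) x = t s x - 1 := by rw [reflE, if_pos hp]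
      refine ⟨by omega, ?_⟩
      rw [res_chg]
      show (e : ℤ) ∣ c s - x + (pp (c s) (reflE e j (T s) (t s)) x : ℕ) - j
      rw [e2, h3]
      convert hp.1 using 1; ring
    · left
      have h3 : reflE e j (T s) (t s) x = t s x := by rw [reflE, if_neg hp]
      omega
  · rintro ⟨s, x, y⟩ ⟨hC1, hC2⟩ hi
    rw [res_chg] at hi
    simp only at hC1 hC2 hi ⊢
    have e1 := (h s).pp_eq x
    have e2 := (h' s).pp_eq x
    have e3 := (h s).pp_eq (x + 1)
    push_cast at e3
    have hp : (e : ℤ) ∣ t s x - j ∧ t s x - 1 ∉ T s := by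
      constructor
      · convert hi using 1; omega
      · intro hm
        rw [← (h s).2.1] at hm
        obtain ⟨y', hy'⟩ := hm
        have h4 : x < y' := by
          rw [← (h s).1.lt_iff_gt]; omega
        have h5 := (h s).1.antitone (show x + 1 ≤ y' from h4)
        omega
    have h3 : reflE e j (T s) (t s) x = t s x - 1 := by rw [reflE, if_pos hp]
    omega
  · rintro ⟨s, x, y⟩ ⟨hC1, hC2⟩ hi
    exfalso
    rw [res_chg] at hi
    simp only at hC1 hC2 hi
    have e1 := (h s).pp_eq x
    have hm : t s x ∈ T s := by rw [← (h s).2.1]; exact ⟨x, rfl⟩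
    have h1 := hadd s _ hm (by convert hi using 1; omega)
    rw [← (h s).2.1] at h1
    obtain ⟨y', hy'⟩ := h1
    have h4 : y' < x := by
      rw [← (h s).1.lt_iff_gt]; omega
    obtain ⟨x, rfl⟩ : ∃ z, x = z + 1 := ⟨x - 1, by omega⟩
    have h5 := (h s).1.antitone (show y' ≤ x by omega)
    have e3 := (h s).pp_eq x
    simp only [Nat.add_sub_cancel] at hC2
    push_cast at e1
    omega

/-! ### Moving base tuples -/

section move
variable {e r : ℕ} [NeZero e]

/-- Rank of a runner. -/
def rkQ (Q : ZMod e → ℤ) (i : ZMod e) : ℕ := (Finset.univ.filter (fun k => Q k < Q i)).card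

/-- The β-sets attached to `Q`. -/
def TQ (Q : ZMod e → ℤ) (m : Fin r → ℕ → Prop) (s : Fin r) : Set ℤ :=
  {z | z < Q (z : ZMod e) + if m s (rkQ Q (z : ZMod e)) then (e : ℤ) else 0}

/-- The terminal β-sets. -/
def UQ (e : ℕ) (N : ℤ) (m : Fin r → ℕ → Prop) (s : Fin r) : Set ℤ :=
  {z | z - (z - N) % e < N + if m s ((z - N) % e).toNat then (e : ℤ) else 0}

/-- The swapped tuple. -/
def swQ (Q : ZMod e → ℤ) (j : ZMod e) (i : ZMod e) : ℤ :=
  if i = j then Q (j - 1) + 1 else if i = j - 1 then Q j - 1 else Q i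

lemma cast_eq_iff (x y : ℤ) : (x : ZMod e) = (y : ZMod e) ↔ (e : ℤ) ∣ x - y := by
  rw [eq_comm, ZMod.intCast_eq_intCast_iff_dvd_sub]

lemma sub_one_ne (he : 2 ≤ e) (j : ZMod e) : j - 1 ≠ j := fun h =>
  zmod_one_ne he (by linear_combination -h)

lemma swQ_cast {Q : ZMod e → ℤ} (hQ : ∀ i, ((Q i : ℤ) : ZMod e) = i) (j i : ZMod e) :
    ((swQ Q j i : ℤ) : ZMod e) = i := by
  unfold swQ
  split_ifs with h1 h2
  · push_cast; rw [hQ, h1]; ring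
  · push_cast; rw [hQ, h2]
  · exact hQ i

lemma big_gap {Q : ZMod e → ℤ} (hQ : ∀ i, ((Q i : ℤ) : ZMod e) = i) {j : ZMod e}
    (hj : Q (j - 1) + 1 < Q j) : Q (j - 1) + 1 + e ≤ Q j := by
  have : (e : ℤ) ∣ Q j - (Q (j - 1) + 1) := by
    rw [← cast_eq_iff]; push_cast; rw [hQ, hQ]; ring
  have := Int.le_of_dvd (by omega) this
  omega

lemma rkQ_sw (he : 2 ≤ e) {Q : ZMod e → ℤ} (hQ : ∀ i, ((Q i : ℤ) : ZMod e) = i) {j : ZMod e}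
    (hj : Q (j - 1) + 1 < Q j) (i : ZMod e) :
    rkQ (swQ Q j) (Equiv.swap j (j - 1) i) = rkQ Q i := by
  have hgap := big_gap hQ hj
  have hne := sub_one_ne he j
  have hinj : ∀ (x y : ZMod e) (n : ℤ), Q x = Q y + n → x = y + n := fun x y n h => by
    rw [← hQ x, h]; push_cast; rw [hQ]
  have h1 : swQ Q j j = Q (j - 1) + 1 := by simp [swQ]
  have h2 : swQ Q j (j - 1) = Q j - 1 := by simp [swQ, hne]
  have h3 : ∀ k, k ≠ j → k ≠ j - 1 → swQ Q j k = Q k := fun k a b => by simp [swQ, a, b]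
  have key : ∀ k i, Q k < Q i ↔ swQ Q j (Equiv.swap j (j - 1) k) <
      swQ Q j (Equiv.swap j (j - 1) i) := by
    have aux1 : ∀ k, k ≠ j → k ≠ j - 1 → Q k ≠ Q j - 1 := fun k a b h =>
      b (by have := hinj k j (-1) (by omega); push_cast at this; rw [this]; ring)
    have aux2 : ∀ k, k ≠ j → k ≠ j - 1 → Q k ≠ Q j := fun k a b h =>
      a (by have := hinj k j 0 (by omega); push_cast at this; rw [this]; ring)
    have aux3 : ∀ k, k ≠ j → k ≠ j - 1 → Q k ≠ Q (j - 1) := fun k a b h =>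
      b (by have := hinj k (j - 1) 0 (by omega); push_cast at this; rw [this]; ring)
    have aux4 : ∀ k, k ≠ j → k ≠ j - 1 → Q k ≠ Q (j - 1) + 1 := fun k a b h =>
      a (by have := hinj k (j - 1) 1 (by omega); push_cast at this; rw [this]; ring)
    have v1 : swQ Q j (Equiv.swap j (j - 1) j) = Q j - 1 := by rw [Equiv.swap_apply_left, h2]
    have v2 : swQ Q j (Equiv.swap j (j - 1) (j - 1)) = Q (j - 1) + 1 := by
      rw [Equiv.swap_apply_right, h1]
    have v3 : ∀ k, k ≠ j → k ≠ j - 1 → swQ Q j (Equiv.swap j (j - 1) k) = Q k := fun k a b => by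
      rw [Equiv.swap_apply_of_ne_of_ne a b, h3 k a b]
    intro k i
    by_cases a1 : k = j
    · subst a1
      by_cases b1 : i = k
      · subst b1; simp
      · by_cases b2 : i = k - 1
        · subst b2; rw [v1, v2]; omega
        · rw [v1, v3 i b1 b2]
          have := aux1 i b1 b2; have := aux2 i b1 b2; omega
    · by_cases a2 : k = j - 1
      · subst a2
        by_cases b1 : i = j
        · subst b1; rw [v1, v2]; omega
        · by_cases b2 : i = j - 1
          · subst b2; simp
          · rw [v2, v3 i b1 b2]
            have := aux3 i b1 b2; have := aux4 i b1 b2; omega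
      · rw [v3 k a1 a2]
        by_cases b1 : i = j
        · subst b1; rw [v1]
          have := aux1 k a1 a2; have := aux2 k a1 a2; omega
        · by_cases b2 : i = j - 1
          · subst b2; rw [v2]
            have := aux3 k a1 a2; have := aux4 k a1 a2; omega
          · rw [v3 i b1 b2]
  unfold rkQ
  symm
  refine Finset.card_equiv (Equiv.swap j (j - 1)) fun k => ?_
  simp only [Finset.mem_filter, Finset.mem_univ, true_and]
  exact key k i

lemma TQ_add (m : Fin r → ℕ → Prop) {Q : ZMod e → ℤ}
    (hQ : ∀ i, ((Q i : ℤ) : ZMod e) = i) {j : ZMod e} (hj : Q (j - 1) + 1 < Q j) (s : Fin r)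
    (z : ℤ) (hz : z ∈ TQ Q m s) (hd : (e : ℤ) ∣ z + 1 - Q j) : z + 1 ∈ TQ Q m s := by
  rw [← cast_eq_iff, hQ] at hd
  have h1 : (z : ZMod e) = j - 1 := by rw [← hd]; push_cast; ring
  have hz : z < Q (z : ZMod e) + if m s (rkQ Q (z : ZMod e)) then (e : ℤ) else 0 := hz
  show z + 1 < Q ((z + 1 : ℤ) : ZMod e) + if m s (rkQ Q ((z + 1 : ℤ) : ZMod e)) then (e : ℤ) else 0
  have hgap := big_gap hQ hj
  rw [hd]
  rw [h1] at hz
  split_ifs at * <;> omega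

lemma TQ_sw (he : 2 ≤ e) (m : Fin r → ℕ → Prop) {Q : ZMod e → ℤ}
    (hQ : ∀ i, ((Q i : ℤ) : ZMod e) = i) {j : ZMod e} (hj : Q (j - 1) + 1 < Q j) (s : Fin r) :
    TQ (swQ Q j) m s = refl e (Q j) (TQ Q m s) := by
  have hne := sub_one_ne he j
  have hrk := rkQ_sw he hQ hj
  have hrk1 : rkQ (swQ Q j) (j - 1) = rkQ Q j := by
    rw [← hrk j, Equiv.swap_apply_left]
  have hrk2 : rkQ (swQ Q j) j = rkQ Q (j - 1) := by
    rw [← hrk (j - 1), Equiv.swap_apply_right]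
  ext z
  show z < _ + ite _ _ _ ↔ ite _ _ _
  have e1 : (e : ℤ) ∣ z - Q j ↔ (z : ZMod e) = j := by rw [← cast_eq_iff, hQ]
  have e2 : (e : ℤ) ∣ z + 1 - Q j ↔ (z : ZMod e) = j - 1 := by
    rw [← cast_eq_iff, hQ]; push_cast; rw [eq_sub_iff_add_eq]
  by_cases h1 : (z : ZMod e) = j
  · rw [if_pos (e1.2 h1), h1, hrk2]
    show _ ↔ z - 1 < Q ((z - 1 : ℤ) : ZMod e) +
      if m s (rkQ Q ((z - 1 : ℤ) : ZMod e)) then (e : ℤ) else 0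
    have : ((z - 1 : ℤ) : ZMod e) = j - 1 := by push_cast; rw [h1]
    rw [this]
    have : swQ Q j j = Q (j - 1) + 1 := by simp [swQ]
    rw [this]
    constructor <;> intro h <;> linarith
  · rw [if_neg (fun h => h1 (e1.1 h))]
    by_cases h2 : (z : ZMod e) = j - 1
    · rw [if_pos (e2.2 h2), h2, hrk1]
      show _ ↔ z + 1 < Q ((z + 1 : ℤ) : ZMod e) +
        if m s (rkQ Q ((z + 1 : ℤ) : ZMod e)) then (e : ℤ) else 0
      have : ((z + 1 : ℤ) : ZMod e) = j := by push_cast; rw [h2]; ring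
      rw [this]
      have : swQ Q j (j - 1) = Q j - 1 := by simp [swQ, hne]
      rw [this]
      constructor <;> intro h <;> linarith
    · rw [if_neg (fun h => h2 (e2.1 h))]
      have h3 := hrk z
      rw [Equiv.swap_apply_of_ne_of_ne h1 h2] at h3
      have : swQ Q j z = Q z := by simp [swQ, h1, h2]
      rw [h3, this]
      rfl

lemma sq_lt (he : 2 ≤ e) {Q : ZMod e → ℤ} {j : ZMod e} (hj : Q (j - 1) + 1 < Q j) :
    ∑ i, (swQ Q j i) ^ 2 < ∑ i, (Q i) ^ 2 := by
  have hne := sub_one_ne he j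
  have hsplit : ∀ f : ZMod e → ℤ, ∑ i, f i =
      f j + (f (j - 1) + ∑ i ∈ (Finset.univ.erase j).erase (j - 1), f i) := fun f => by
    rw [Finset.add_sum_erase _ f (Finset.mem_erase.2 ⟨hne, Finset.mem_univ _⟩),
      Finset.add_sum_erase _ f (Finset.mem_univ _)]
  rw [hsplit, hsplit (fun i => (Q i) ^ 2)]
  have h1 : swQ Q j j = Q (j - 1) + 1 := by simp [swQ]
  have h2 : swQ Q j (j - 1) = Q j - 1 := by simp [swQ, hne]
  have h3 : ∑ i ∈ (Finset.univ.erase j).erase (j - 1), (swQ Q j i) ^ 2 =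
      ∑ i ∈ (Finset.univ.erase j).erase (j - 1), (Q i) ^ 2 := by
    refine Finset.sum_congr rfl fun i hi => ?_
    simp only [Finset.mem_erase, Finset.mem_univ, and_true] at hi
    simp [swQ, hi.1, hi.2]
  rw [h1, h2, h3]
  nlinarith

lemma terminal {Q : ZMod e → ℤ} (hQ : ∀ i, ((Q i : ℤ) : ZMod e) = i)
    (ht : ∀ j, Q j ≤ Q (j - 1) + 1) : ∃ N : ℤ, ∀ z : ℤ, Q (z : ZMod e) = N + (z - N) % e := by
  obtain ⟨i0, -, hi0⟩ := Finset.exists_min_image (Finset.univ : Finset (ZMod e)) Q ⟨0, by simp⟩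
  have hpos : (0 : ℤ) < e := by have := NeZero.pos e; omega
  refine ⟨Q i0, fun z => ?_⟩
  have hup : ∀ k : ℕ, Q (i0 + k) ≤ Q i0 + k := by
    intro k
    induction k with
    | zero => simp
    | succ k ih =>
      have := ht (i0 + (k + 1 : ℕ))
      rw [show i0 + ((k + 1 : ℕ) : ZMod e) - 1 = i0 + k by push_cast; ring] at this
      push_cast at this ⊢
      linarith
  have hk0 := Int.emod_nonneg (z - Q i0) hpos.ne'
  have hk1 := Int.emod_lt_of_pos (z - Q i0) hpos
  set k := (z - Q i0) % e with hk
  have hz : (z : ZMod e) = i0 + (k.toNat : ℕ) := by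
    have h1 : ((k.toNat : ℕ) : ZMod e) = ((k : ℤ) : ZMod e) := by
      rw [← Int.cast_natCast, Int.toNat_of_nonneg hk0]
    have h2 : ((k : ℤ) : ZMod e) = ((z - Q i0 : ℤ) : ZMod e) := by
      rw [hk, ZMod.intCast_mod]
    rw [h1, h2]; push_cast; rw [hQ]; ring
  have h1 := hup k.toNat
  have h2 := hi0 (z : ZMod e) (Finset.mem_univ _)
  rw [← hz] at h1
  have h3 : (e : ℤ) ∣ (Q i0 + k) - Q (z : ZMod e) := by
    rw [← cast_eq_iff, hQ, hz]; push_cast; rw [hQ]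
    rw [← Int.cast_natCast, Int.toNat_of_nonneg hk0]
  have h4 : (Q i0 + k) - Q (z : ZMod e) = 0 :=
    Int.eq_zero_of_dvd_of_nonneg_of_lt (by omega) (by omega) h3
  omega

lemma rk_terminal {Q : ZMod e → ℤ} {N : ℤ}
    (hN : ∀ z : ℤ, Q (z : ZMod e) = N + (z - N) % e) (z : ℤ) :
    rkQ Q (z : ZMod e) = ((z - N) % e).toNat := by
  have hpos : (0 : ℤ) < e := by have := NeZero.pos e; omega
  have hk0 := Int.emod_nonneg (z - N) hpos.ne'
  have hk1 := Int.emod_lt_of_pos (z - N) hpos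
  unfold rkQ
  rw [hN z]
  set k := (z - N) % e with hk
  have hval : ∀ n : ℕ, n < e → Q ((N + n : ℤ) : ZMod e) = N + n := fun n hn => by
    rw [hN]; congr 1
    rw [show N + (n : ℤ) - N = n by ring]
    exact Int.emod_eq_of_lt (by omega) (by omega)
  rw [← Finset.card_range k.toNat]
  symm
  refine Finset.card_bij (fun n _ => ((N + n : ℤ) : ZMod e)) ?_ ?_ ?_
  · intro n hn
    rw [Finset.mem_range] at hn
    rw [Finset.mem_filter]
    refine ⟨Finset.mem_univ _, ?_⟩
    rw [hval n (by omega)]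
    omega
  · intro n hn n' hn' h
    rw [Finset.mem_range] at hn hn'
    have h := congrArg Q h
    rw [hval n (by omega), hval n' (by omega)] at h
    omega
  · intro i hi
    obtain ⟨y, rfl⟩ := ZMod.intCast_surjective i
    rw [Finset.mem_filter, hN] at hi
    have h0 := Int.emod_nonneg (y - N) hpos.ne'
    refine ⟨((y - N) % e).toNat, by rw [Finset.mem_range]; omega, ?_⟩
    rw [Int.toNat_of_nonneg h0]
    push_cast
    ring

lemma TQ_terminal (m : Fin r → ℕ → Prop) {Q : ZMod e → ℤ} {N : ℤ}
    (hN : ∀ z : ℤ, Q (z : ZMod e) = N + (z - N) % e) (s : Fin r) : TQ Q m s = UQ e N m s := by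
  ext z
  show z < _ + ite _ _ _ ↔ z - _ < _ + ite _ _ _
  rw [rk_terminal hN, hN]
  constructor <;> intro h <;> linarith

lemma kl_move (he : 2 ≤ e) (m : Fin r → ℕ → Prop) (c : Fin r → ℤ) (n : ℕ) :
    ∀ (Q : ZMod e → ℤ) (t : Fin r → ℕ → ℤ), (∀ i, ((Q i : ℤ) : ZMod e) = i) →
    (∀ s, BE (TQ Q m s) (c s) (t s)) → (∑ i, (Q i) ^ 2).toNat = n →
    ∃ (N : ℤ) (t' : Fin r → ℕ → ℤ), (∀ s, BE (UQ e N m s) (c s) (t' s)) ∧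
      (IsKleshchev (chg e c) (fun s => pp (c s) (t s)) ↔
        IsKleshchev (chg e c) (fun s => pp (c s) (t' s))) := by
  induction n using Nat.strong_induction_on with
  | _ n ih =>
    intro Q t hQ ht hn
    by_cases hex : ∃ j, Q (j - 1) + 1 < Q j
    · obtain ⟨j, hj⟩ := hex
      have hadd := TQ_add m hQ hj
      have hlt := sq_lt he hj
      have hnn : 0 ≤ ∑ i, (swQ Q j i) ^ 2 := Finset.sum_nonneg fun i _ => sq_nonneg _
      obtain ⟨N, t', h1, h2⟩ := ih _ (by omega) (swQ Q j)
        (fun s => reflE e (Q j) (TQ Q m s) (t s)) (swQ_cast hQ j)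
        (fun s => by rw [TQ_sw he m hQ hj s]; exact refl_BE he (ht s) (hadd s)) rfl
      exact ⟨N, t', h1, (kl_refl he ht hadd).trans h2⟩
    · obtain ⟨N, hN⟩ := terminal hQ (fun j => by by_contra h; exact hex ⟨j, by omega⟩)
      exact ⟨N, t, fun s => by rw [← TQ_terminal m hN]; exact ht s, Iff.rfl⟩

end move

/-! ### Shifting the charge -/

lemma BE_shift {e r : ℕ} {N : ℤ} {m : Fin r → ℕ → Prop} {s : Fin r} {c : ℤ} {t : ℕ → ℤ}
    (h : BE (UQ e N m s) c t) : BE (UQ e 0 m s) (c - N) (fun x => t x - N) := by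
  obtain ⟨h1, h2, n, h3⟩ := h
  refine ⟨fun x y hxy => by have := h1 hxy; show t y - N < t x - N; omega, ?_, n, fun x hx => ?_⟩
  · have key : ∀ z, z ∈ UQ e 0 m s ↔ z + N ∈ UQ e N m s := by
      intro z
      show z - (z - 0) % e < 0 + ite _ _ _ ↔ z + N - (z + N - N) % e < N + ite _ _ _
      rw [show z + N - N = z by ring, show z - 0 = z by ring]
      constructor <;> intro h <;> linarith
    ext z
    rw [key, ← h2]
    constructor
    · rintro ⟨x, rfl⟩; exact ⟨x, by ring⟩
    · rintro ⟨x, hx⟩; exact ⟨x, by show t x - N = z; omega⟩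
  · have := h3 x hx
    show t x - N = _
    omega

lemma res_shift {e r : ℕ} {a a' : Fin r → ZMod e} {v : ZMod e} (h : ∀ s, a' s = a s + v)
    (A : Node r) : res a' A = res a A + v := by
  unfold res; rw [h]; ring

lemma normal_shift {e r : ℕ} {a a' : Fin r → ZMod e} {v : ZMod e} (h : ∀ s, a' s = a s + v)
    (lam : Fin r → ℕ → ℕ) (A : Node r) : Normal a' lam A ↔ Normal a lam A := by
  unfold Normal
  simp only [res_shift h, add_left_inj]

lemma kl_shift_one {e r : ℕ} {a a' : Fin r → ZMod e} {v : ZMod e} (h : ∀ s, a' s = a s + v)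
    {lam : Fin r → ℕ → ℕ} (hk : IsKleshchev a lam) : IsKleshchev a' lam := by
  induction hk with
  | empty => exact IsKleshchev.empty
  | step lam A hA _ ih =>
    refine IsKleshchev.step lam A ?_ ih
    refine ⟨(normal_shift h lam A).2 hA.1, fun B hB hi hne => ?_⟩
    rw [res_shift h, res_shift h, add_left_inj] at hi
    exact hA.2 B ((normal_shift h lam B).1 hB) hi hne

lemma kl_shift {e r : ℕ} {a a' : Fin r → ZMod e} {v : ZMod e} (h : ∀ s, a' s = a s + v)
    (lam : Fin r → ℕ → ℕ) : IsKleshchev a lam ↔ IsKleshchev a' lam :=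
  ⟨kl_shift_one h, kl_shift_one (v := -v) fun s => by rw [h]; ring⟩

/-! ### Link with the frozen definitions -/

lemma Tset_BE {e r : ℕ} (he : 2 ≤ e) (B : Fin e → ℕ) (M : Fin r → Fin e → Bool) (s : Fin r) :
    BE (Tset B M s) (nsum B M s : ℤ) (tEnum (Tset B M s)) := by
  set F : Finset ℤ := (Finset.univ.sigma fun i : Fin e => Finset.range (beads B M s i)).image
    (fun p => (((p.1 : ℕ) + e * p.2 : ℕ) : ℤ)) with hFdef
  have hdm : ∀ (i : Fin e) (k : ℕ), ((i : ℕ) + e * k) % e = i ∧ ((i : ℕ) + e * k) / e = k := by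
    intro i k
    constructor
    · rw [Nat.add_mul_mod_self_left, Nat.mod_eq_of_lt i.2]
    · rw [Nat.add_mul_div_left _ _ (by omega), Nat.div_eq_of_lt i.2, zero_add]
  have hF : ∀ z, z ∈ F ↔ z ∈ Tset B M s ∧ 0 ≤ z := by
    intro z
    rw [hFdef, Finset.mem_image]
    constructor
    · rintro ⟨⟨i, k⟩, hp, rfl⟩
      simp only [Finset.mem_sigma, Finset.mem_univ, Finset.mem_range, true_and] at hp
      refine ⟨Or.inr ⟨by positivity, ?_, ?_⟩, by positivity⟩
      · exact Nat.mod_lt _ (by omega)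
      · have h1 := hdm i k
        simp only [Int.toNat_natCast]
        rw [h1.2]
        have : (⟨((i : ℕ) + e * k) % e, Nat.mod_lt _ (by omega)⟩ : Fin e) = i := Fin.ext h1.1
        rw [this]
        exact hp
    · rintro ⟨hz, h0⟩
      rcases hz with hz | ⟨-, h1, h2⟩
      · omega
      · refine ⟨⟨⟨z.toNat % e, h1⟩, z.toNat / e⟩, ?_, ?_⟩
        · simp only [Finset.mem_sigma, Finset.mem_univ, Finset.mem_range, true_and]
          exact h2
        · simp only
          rw [Nat.mod_add_div, Int.toNat_of_nonneg h0]
  have hcard : F.card = nsum B M s := by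
    rw [hFdef, Finset.card_image_of_injective, Finset.card_sigma]
    · simp [nsum]
    · rintro ⟨i, k⟩ ⟨i', k'⟩ h
      have h : (i : ℕ) + e * k = i' + e * k' := Int.ofNat.inj h
      have h1 := hdm i k
      have h2 := hdm i' k'
      rw [h] at h1
      have h3 : i = i' := Fin.ext (h1.1.symm.trans h2.1)
      have h4 : k = k' := h1.2.symm.trans h2.2
      rw [h3, h4]
  obtain ⟨b, hb⟩ := F.bddAbove
  have := tEnum_count (T := Tset B M s) (a := 0) (b := max b 0 + 1) (fun z hz => Or.inl hz)
    (fun z hz => ?_) F hF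
  · rwa [hcard, zero_add] at this
  · by_cases h0 : 0 ≤ z
    · have := hb ((hF z).2 ⟨hz, h0⟩)
      have := le_max_left b 0
      omega
    · have := le_max_right b 0
      omega

/-- The integers attached to a base tuple. -/
def QB {e : ℕ} [NeZero e] (B : Fin e → ℕ) (i : ZMod e) : ℤ :=
  ((i.val + e * B ⟨i.val, ZMod.val_lt i⟩ : ℕ) : ℤ)

lemma QB_cast {e : ℕ} [NeZero e] (B : Fin e → ℕ) (i : ZMod e) : ((QB B i : ℤ) : ZMod e) = i := by
  unfold QB
  push_cast
  simp

/-- The matrix as predicates. -/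
def mB {e r : ℕ} (M : Fin r → Fin e → Bool) (s : Fin r) (n : ℕ) : Prop :=
  ∃ h : n < e, M s ⟨n, h⟩ = true

lemma base_lt {e a b x y : ℕ} (hx : x < e) (hy : y < e) :
    x + e * a < y + e * b ↔ a < b ∨ (a = b ∧ x < y) := by
  rcases lt_trichotomy a b with h | h | h
  · have := Nat.mul_le_mul_left e (show a + 1 ≤ b from h)
    rw [Nat.mul_add] at this
    constructor
    · intro _; exact Or.inl h
    · intro _; omega
  · subst h; omega
  · have := Nat.mul_le_mul_left e (show b + 1 ≤ a from h)
    rw [Nat.mul_add] at this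
    constructor
    · intro _; omega
    · intro _; omega

lemma rk_QB {e : ℕ} [NeZero e] (B : Fin e → ℕ) (i : ZMod e) :
    rkQ (QB B) i = (rank B ⟨i.val, ZMod.val_lt i⟩ : ℕ) := by
  unfold rkQ rank
  show (Finset.univ.filter (fun k => QB B k < QB B i)).card =
    (Finset.univ.filter (fun j => prec B j ⟨i.val, ZMod.val_lt i⟩)).card
  refine Finset.card_bij (fun k _ => (⟨k.val, ZMod.val_lt k⟩ : Fin e)) ?_ ?_ ?_
  · intro k hk
    rw [Finset.mem_filter] at hk ⊢
    refine ⟨Finset.mem_univ _, ?_⟩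
    have h := hk.2
    unfold QB at h
    rw [Nat.cast_lt, base_lt (ZMod.val_lt k) (ZMod.val_lt i)] at h
    exact h
  · intro k _ k' _ h
    exact ZMod.val_injective e (Fin.mk.inj_iff.1 h)
  · intro k hk
    rw [Finset.mem_filter] at hk
    have hv : ((k : ℕ) : ZMod e).val = k := ZMod.val_natCast_of_lt k.2
    have hk' : (⟨((k : ℕ) : ZMod e).val, ZMod.val_lt _⟩ : Fin e) = k := Fin.ext hv
    refine ⟨((k : ℕ) : ZMod e), ?_, hk'⟩
    rw [Finset.mem_filter]
    refine ⟨Finset.mem_univ _, ?_⟩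
    unfold QB
    rw [Nat.cast_lt, base_lt (ZMod.val_lt _) (ZMod.val_lt i), hk', hv]
    exact hk.2

lemma Tset_eq {e r : ℕ} [NeZero e] (B : Fin e → ℕ) (M : Fin r → Fin e → Bool) (s : Fin r) :
    Tset B M s = TQ (QB B) (mB M) s := by
  have hpos : 0 < e := NeZero.pos e
  ext z
  set i : Fin e := ⟨((z : ℤ) : ZMod e).val, ZMod.val_lt _⟩ with hi
  have hm : mB M s (rkQ (QB B) (z : ZMod e)) ↔ M s (rank B i) = true := by
    rw [rk_QB]
    exact ⟨fun ⟨_, h⟩ => h, fun h => ⟨(rank B i).2, h⟩⟩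
  have hR : z ∈ TQ (QB B) (mB M) s ↔ z < ((i : ℕ) : ℤ) + e * (beads B M s i : ℕ) := by
    show z < _ + ite _ _ _ ↔ _
    have h1 : QB B (z : ZMod e) = ((i : ℕ) : ℤ) + e * B i := by
      unfold QB; push_cast; rfl
    rw [h1]
    unfold beads
    by_cases hM : M s (rank B i) = true
    · rw [if_pos (hm.2 hM), if_pos hM]; push_cast; rw [mul_add, mul_one, add_assoc]
    · rw [if_neg (fun h => hM (hm.1 h)), if_neg hM]; push_cast; rw [add_zero, add_zero]
  rw [hR]
  have hz : (z % e : ℤ) = (i : ℕ) := by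
    rw [hi]; exact (ZMod.val_intCast z).symm
  have hdiv := Int.mul_ediv_add_emod z e
  have hsum : z < ((i : ℕ) : ℤ) + e * (beads B M s i : ℕ) ↔ z / e < (beads B M s i : ℕ) := by
    have he : (0 : ℤ) < e := by omega
    constructor
    · intro h
      have : (e : ℤ) * (z / e) < e * (beads B M s i : ℕ) := by omega
      exact lt_of_mul_lt_mul_left this he.le
    · intro h
      have := mul_lt_mul_of_pos_left h he
      omega
  rw [hsum]
  by_cases h0 : 0 ≤ z
  · obtain ⟨n, rfl⟩ := Int.eq_ofNat_of_zero_le h0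
    have hin : (⟨n % e, Nat.mod_lt _ hpos⟩ : Fin e) = i := by
      apply Fin.ext
      show n % e = i
      exact_mod_cast hz
    constructor
    · rintro (h | ⟨-, h1, h2⟩)
      · omega
      · simp only [Int.toNat_natCast] at h2
        rw [hin] at h2
        exact_mod_cast h2
    · intro h
      refine Or.inr ⟨h0, Nat.mod_lt _ hpos, ?_⟩
      simp only [Int.toNat_natCast]
      rw [hin]
      exact_mod_cast h
  · constructor
    · intro _
      have : z / e < 0 := Int.ediv_neg_of_neg_of_pos (by omega) (by omega)
      omega
    · intro _; exact Or.inl (by omega)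

lemma kl_UQ {e r : ℕ} (he : 2 ≤ e) (B : Fin e → ℕ) (M : Fin r → Fin e → Bool) :
    ∃ (c : Fin r → ℤ) (t : Fin r → ℕ → ℤ), (∀ s, BE (UQ e 0 (mB M) s) (c s) (t s)) ∧
      (IsKleshchev (PtCharge B M) (PtPart B M) ↔
        IsKleshchev (chg e c) (fun s => pp (c s) (t s))) := by
  have : NeZero e := ⟨by omega⟩
  have hBE : ∀ s, BE (TQ (QB B) (mB M) s) (nsum B M s : ℤ) (tEnum (Tset B M s)) := fun s => by
    rw [← Tset_eq]; exact Tset_BE he B M s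
  obtain ⟨N, t', h1, h2⟩ := kl_move he (mB M) (fun s => (nsum B M s : ℤ)) _ (QB B)
    (fun s => tEnum (Tset B M s)) (QB_cast B) hBE rfl
  refine ⟨fun s => (nsum B M s : ℤ) - N, fun s x => t' s x - N, fun s => BE_shift (h1 s), ?_⟩
  have e1 : PtCharge B M = chg e (fun s => (nsum B M s : ℤ)) := by
    funext s; simp [PtCharge, chg]
  have e2 : PtPart B M = fun s => pp (nsum B M s : ℤ) (tEnum (Tset B M s)) := rfl
  have e3 : (fun s => pp ((nsum B M s : ℤ) - N) (fun x => t' s x - N)) =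
      fun s => pp (nsum B M s : ℤ) (t' s) := by
    funext s x
    unfold pp
    congr 1
    ring
  rw [e1, e2, h2, e3]
  refine kl_shift (v := ((-N : ℤ) : ZMod e)) (fun s => ?_) _
  simp only [chg]
  push_cast
  ring

/-- Kleshchevness of `Pt(B,M)` is independent of the base tuple `B`. -/
theorem kleshchev_baseTuple_independent (e r : ℕ) (he : 2 ≤ e) (hr : 1 ≤ r)
    (B : Fin e → ℕ) (hB : ∃ i, B i = 0)
    (M : Fin r → Fin e → Bool) (hM : ∀ i : Fin e, ∃ s : Fin r, M s i = false) :
    IsKleshchev (PtCharge B M) (PtPart B M) ↔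
      IsKleshchev (PtCharge (fun _ => 0) M) (PtPart (fun _ => 0) M) := by
  obtain ⟨c, t, h1, h2⟩ := kl_UQ he B M
  obtain ⟨c', t', h1', h2'⟩ := kl_UQ he (fun _ => 0) M
  have hc : c = c' := funext fun s => ((h1 s).unique (h1' s)).2
  have ht : t = t' := funext fun s => ((h1 s).unique (h1' s)).1
  subst hc
  subst ht
  rw [h2, h2']


end
end AK
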